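/- Assume α > 0, Assumptions 2 and 5 hold, and ℓ is the logistic loss ℓ_log. Then gradient descent on the empirical risk of a deep linear network satisfies lim_{t→∞} |⟨v_1(t), ū⟩| = 1 for any choice of top singular vector pair (u_1(t), v_1(t)) of W_1(t), and consequently lim_{t→∞} w_prod(t) / ∏_{k=1}^L ‖W_k(t)‖_F = ū. -/

import Mathlib

/-!
With `g` the gradient of the risk at the predictor `w_prod`, `a_k` (`av`) the product of the layers
from `k` upwards, and `b_k` (`bv`) the product of the layers below `k` applied to `g`, the gradient
with respect to layer `k` is the rank-one matrix `a_{k+1} b_kᵀ`, and `⟨a_k, b_k⟩ = ⟨w_prod, g⟩` does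
not depend on `k`. Layers are indexed from `0`, so that `w_prod = a_0 = W_0ᵀ a_1`.

* The step size makes every step decrease the risk by at least `η ‖∇R‖² / 2` (`descent`), so
  `∑ η_t ‖∇R‖²`, and with it `∑ η_t² ‖∇R‖²`, is finite.
* Under a gradient step, the differences of squared Frobenius norms of adjacent layers and the
  matrices `W_{k+1}ᵀ W_{k+1} - W_k W_kᵀ` change only to second order in `η`, hence stay bounded.
  As the top layer is a single row, downward induction gives
  `(‖W_k‖_F² - E) ‖a_{k+1}‖² ≤ ‖a_k‖²` with a constant `E` (`near_rank_one`,
  `GDRun.exists_balance`): every layer is within bounded distance of a rank-one matrix.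
* The risk tends to zero (`GDRun.risk_eventually_lt`), so every layer diverges
  (`GDRun.fn_tendsto`).
* Let `P = ‖W_0‖_F² - ‖W_0 ū‖²`, the squared norm of the part of the first layer orthogonal to `ū`,
  and let `r` be the part of `w_prod` orthogonal to `ū`. A gradient step changes `P` by at most
  `-2 η ⟨r, g⟩ + η² ‖∇R‖²`. If `P` is large, then so is `r` by the near rank-one structure, and then
  `⟨r, g⟩ ≥ 0`: as `α > 0`, some support vector has inner product at most `-α ‖r‖` with `r`, and
  the exponential tail of the loss lets it dominate (`projPerp_dot_grad_nonneg`). Hence `P` stays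
  bounded (`GDRun.exists_perp_bound`).

A top right singular vector `v` of `W_0` satisfies `‖W_0 ū‖² (1 - ⟨v, ū⟩²) ≤ P`, while
`‖W_0 ū‖² = ‖W_0‖_F² - P` diverges; this gives the first limit. For the second, the bounds above yield
`∏ (‖W_k‖_F² - D) ≤ ⟨w_prod, ū⟩² ≤ ∏ ‖W_k‖_F²`, and the ratio of the two outer terms tends to `1`.
-/

open Matrix Filter
open scoped BigOperators

noncomputable section

/-- Euclidean norm of a vector in `ℝ^m`. -/
def vecNorm {m : Type*} [Fintype m] (v : m → ℝ) : ℝ :=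
  Real.sqrt (∑ i, (v i) ^ 2)

/-- Frobenius norm of a real matrix. -/
def frobNorm {m n : Type*} [Fintype m] [Fintype n] (M : Matrix m n ℝ) : ℝ :=
  Real.sqrt (∑ i, ∑ j, (M i j) ^ 2)

/-- Spectral norm (operator 2-norm) of a real matrix. -/
def specNorm {m n : Type*} [Fintype m] [Fintype n] (M : Matrix m n ℝ) : ℝ :=
  sSup {c : ℝ | ∃ v : n → ℝ, vecNorm v = 1 ∧ c = vecNorm (M.mulVec v)}

/-- `(u, v)` is a top singular vector pair of `M`: both are unit vectors,
`M v = ‖M‖₂ u` and `Mᵀ u = ‖M‖₂ v`. -/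
def IsTopSingularPair {m n : Type*} [Fintype m] [Fintype n]
    (M : Matrix m n ℝ) (u : m → ℝ) (v : n → ℝ) : Prop :=
  vecNorm u = 1 ∧ vecNorm v = 1 ∧
    M.mulVec v = specNorm M • u ∧ Mᵀ.mulVec u = specNorm M • v

/-- Parameters of a deep linear network: layer `k` (0-indexed; paper layer `k+1`)
is a matrix mapping `ℝ^{dim k}` to `ℝ^{dim (k+1)}`. -/
abbrev Layers (dim : ℕ → ℕ) := ∀ j : ℕ, Matrix (Fin (dim (j+1))) (Fin (dim j)) ℝ

/-- Product `W_{j-1} ⋯ W_0` of the bottom `j` layers (paper: `W_j ⋯ W_1`). -/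
def prodUpTo {dim : ℕ → ℕ} (W : Layers dim) : ∀ j : ℕ, Matrix (Fin (dim j)) (Fin (dim 0)) ℝ
  | 0 => 1
  | (j+1) => W j * prodUpTo W j

/-- Product `W_{L-1} ⋯ W_j` of the layers from `j` up to the top layer `L-1`
(paper: `W_L ⋯ W_{j+1}`); for `j ≥ L` it is a pseudo-identity. -/
def prodFrom {dim : ℕ → ℕ} (L : ℕ) (W : Layers dim) (j : ℕ) :
    Matrix (Fin (dim L)) (Fin (dim j)) ℝ :=
  if h : j < L then prodFrom L W (j+1) * W j
  else Matrix.of fun i j' => if (i : ℕ) = (j' : ℕ) then 1 else 0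
  termination_by L - j
  decreasing_by omega

/-- The linear predictor `w_prod = (W_L ⋯ W_1)ᵀ ∈ ℝ^d` induced by the network
(recall `dim L = 1`). -/
def wprod {dim : ℕ → ℕ} (L : ℕ) (W : Layers dim) : Fin (dim 0) → ℝ :=
  fun j => ∑ a, prodUpTo W L a j

/-- Empirical risk of a linear predictor `w`: `R(w) = (1/n) ∑ᵢ ℓ(⟨w, zᵢ⟩)`. -/
def riskV {n d : ℕ} (ℓ : ℝ → ℝ) (z : Fin n → Fin d → ℝ) (w : Fin d → ℝ) : ℝ :=
  (n : ℝ)⁻¹ * ∑ i, ℓ (w ⬝ᵥ z i)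

/-- Gradient of the risk w.r.t. the linear predictor: `∇R(w) = (1/n) ∑ᵢ ℓ'(⟨w, zᵢ⟩) zᵢ`. -/
def gradRiskV {n d : ℕ} (ℓ' : ℝ → ℝ) (z : Fin n → Fin d → ℝ) (w : Fin d → ℝ) :
    Fin d → ℝ :=
  (n : ℝ)⁻¹ • ∑ i, ℓ' (w ⬝ᵥ z i) • z i

/-- The partial gradient of the empirical risk with respect to layer `k`:
`∂R/∂W_k = (W_L ⋯ W_{k+1})ᵀ ∇R(w_prod)ᵀ (W_{k-1} ⋯ W_1)ᵀ`. -/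
def gradLayer {dim : ℕ → ℕ} (L : ℕ) (ℓ' : ℝ → ℝ) {n : ℕ}
    (z : Fin n → Fin (dim 0) → ℝ) (W : Layers dim) (k : ℕ) :
    Matrix (Fin (dim (k+1))) (Fin (dim k)) ℝ :=
  (prodFrom L W (k+1))ᵀ *
    (Matrix.of fun (_ : Fin (dim L)) (j : Fin (dim 0)) => gradRiskV ℓ' z (wprod L W) j) *
    (prodUpTo W k)ᵀ

/-- Empirical risk of the network. -/
def riskW {dim : ℕ → ℕ} (L : ℕ) (ℓ : ℝ → ℝ) {n : ℕ}
    (z : Fin n → Fin (dim 0) → ℝ) (W : Layers dim) : ℝ :=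
  riskV ℓ z (wprod L W)

/-- Gradient flow: `dW(t)/dt = −∇R(W(t))` for all `t ≥ 0`, entrywise on each layer. -/
def IsGradientFlow {dim : ℕ → ℕ} (L : ℕ) (ℓ' : ℝ → ℝ) {n : ℕ}
    (z : Fin n → Fin (dim 0) → ℝ) (W : ℝ → Layers dim) : Prop :=
  ∀ t : ℝ, 0 ≤ t → ∀ k < L, ∀ i j,
    HasDerivAt (fun s => W s k i j) (-(gradLayer L ℓ' z (W t) k i j)) t

/-- The initialization-dependent constant `D`. -/
def Dconst {dim : ℕ → ℕ} (L : ℕ) (W0 : Layers dim) : ℝ :=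
  (⨆ k : Fin L, frobNorm (W0 k) ^ 2) - frobNorm (W0 (L-1)) ^ 2
    + ∑ k ∈ Finset.range (L-1),
        specNorm (W0 k * (W0 k)ᵀ - (W0 (k+1))ᵀ * W0 (k+1))

/-- Euclidean norm of a parameter tuple (all entries of the first `L` layers concatenated). -/
def paramNorm {dim : ℕ → ℕ} (L : ℕ) (V : Layers dim) : ℝ :=
  Real.sqrt (∑ k ∈ Finset.range L, frobNorm (V k) ^ 2)

/-- Squared Euclidean norm of the full gradient `∇R(W)`. -/
def gradNormSq {dim : ℕ → ℕ} (L : ℕ) (ℓ' : ℝ → ℝ) {n : ℕ}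
    (z : Fin n → Fin (dim 0) → ℝ) (W : Layers dim) : ℝ :=
  ∑ k ∈ Finset.range L, frobNorm (gradLayer L ℓ' z W k) ^ 2

/-- The data-dependent constant `α = min_{‖ξ‖=1, ξ ⟂ ū} max_{i ∈ S} ⟨ξ, zᵢ⟩`,
where `S` is the set of support vectors. -/
def alphaConst {n d : ℕ} (z : Fin n → Fin d → ℝ) (ubar : Fin d → ℝ) (γ : ℝ) : ℝ :=
  sInf {c : ℝ | ∃ ξ : Fin d → ℝ, vecNorm ξ = 1 ∧ ξ ⬝ᵥ ubar = 0 ∧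
    c = sSup {r : ℝ | ∃ i : Fin n, ubar ⬝ᵥ z i = γ ∧ r = ξ ⬝ᵥ z i}}

/-- Orthogonal projection onto the orthogonal complement of `span(ū)` (for `ū` a unit vector). -/
def projPerp {d : ℕ} (ubar : Fin d → ℝ) (w : Fin d → ℝ) : Fin d → ℝ :=
  w - (w ⬝ᵥ ubar) • ubar

/-! ### Euclidean and Frobenius norms -/

section Norms

variable {m n : Type*} [Fintype m] [Fintype n]

theorem vn_nonneg (v : m → ℝ) : 0 ≤ vecNorm v := Real.sqrt_nonneg _

theorem fn_nonneg (M : Matrix m n ℝ) : 0 ≤ frobNorm M := Real.sqrt_nonneg _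

theorem vn_eq_norm (v : m → ℝ) : vecNorm v = ‖WithLp.toLp 2 v‖ := by
  simp [vecNorm, EuclideanSpace.norm_eq]

theorem vn_sq (v : m → ℝ) : vecNorm v ^ 2 = v ⬝ᵥ v := by
  rw [vecNorm, Real.sq_sqrt (Finset.sum_nonneg fun i _ => sq_nonneg _)]
  simp [dotProduct, pow_two]

theorem vn_zero : vecNorm (0 : m → ℝ) = 0 := by simp [vecNorm]

theorem vn_eq_zero {v : m → ℝ} (h : vecNorm v = 0) : v = 0 := by
  have := vn_sq v
  rw [h] at this
  simpa using (dotProduct_self_eq_zero (v := v)).1 (by linarith)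

theorem abs_dot_le (v w : m → ℝ) : |v ⬝ᵥ w| ≤ vecNorm v * vecNorm w := by
  have h := abs_real_inner_le_norm (WithLp.toLp 2 w) (WithLp.toLp 2 v)
  rw [← vn_eq_norm, ← vn_eq_norm] at h
  simpa [PiLp.inner_apply, dotProduct, mul_comm] using h

theorem dot_le (v w : m → ℝ) : v ⬝ᵥ w ≤ vecNorm v * vecNorm w :=
  (le_abs_self _).trans (abs_dot_le v w)

theorem vn_add_le (v w : m → ℝ) : vecNorm (v + w) ≤ vecNorm v + vecNorm w := by
  simp only [vn_eq_norm, WithLp.toLp_add]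
  exact norm_add_le _ _

theorem vn_smul (c : ℝ) (v : m → ℝ) : vecNorm (c • v) = |c| * vecNorm v := by
  simp only [vn_eq_norm, WithLp.toLp_smul, norm_smul, Real.norm_eq_abs]

theorem vn_sum_le {ι : Type*} (s : Finset ι) (f : ι → m → ℝ) :
    vecNorm (∑ i ∈ s, f i) ≤ ∑ i ∈ s, vecNorm (f i) := by
  classical
  induction s using Finset.induction_on with
  | empty => simp [vn_zero]
  | insert a s ha ih =>
    rw [Finset.sum_insert ha, Finset.sum_insert ha]
    exact (vn_add_le _ _).trans (by linarith)

theorem vn_sq_sub_smul (v u : m → ℝ) (c : ℝ) :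
    vecNorm (v - c • u) ^ 2 = vecNorm v ^ 2 - 2 * c * (v ⬝ᵥ u) + c ^ 2 * vecNorm u ^ 2 := by
  simp only [vn_sq, sub_dotProduct, dotProduct_sub, smul_dotProduct, dotProduct_smul, smul_eq_mul,
    dotProduct_comm u v]
  ring

/-- The Frobenius norm is the Euclidean norm of the family of all entries. -/
theorem fn_eq_vn (M : Matrix m n ℝ) : frobNorm M = vecNorm (fun p : m × n => M p.1 p.2) := by
  simp [frobNorm, vecNorm, Fintype.sum_prod_type]

theorem fn_sq (M : Matrix m n ℝ) : frobNorm M ^ 2 = ∑ i, ∑ j, M i j ^ 2 :=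
  Real.sq_sqrt (Finset.sum_nonneg fun _ _ => Finset.sum_nonneg fun _ _ => sq_nonneg _)

theorem fn_sq_rows (M : Matrix m n ℝ) : frobNorm M ^ 2 = ∑ i, vecNorm (M i) ^ 2 := by
  rw [fn_sq]
  refine Finset.sum_congr rfl fun i _ => ?_
  rw [vn_sq]; simp [dotProduct, pow_two]

theorem fn_transpose (M : Matrix m n ℝ) : frobNorm Mᵀ = frobNorm M := by
  simp only [frobNorm, transpose_apply]
  rw [Finset.sum_comm]

theorem fn_add_le (A B : Matrix m n ℝ) : frobNorm (A + B) ≤ frobNorm A + frobNorm B := by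
  simp only [fn_eq_vn]
  exact vn_add_le (fun p : m × n => A p.1 p.2) (fun p => B p.1 p.2)

theorem fn_smul (c : ℝ) (A : Matrix m n ℝ) : frobNorm (c • A) = |c| * frobNorm A := by
  simp only [fn_eq_vn]
  exact vn_smul c (fun p : m × n => A p.1 p.2)

theorem vn_mulVec_le (M : Matrix m n ℝ) (v : n → ℝ) :
    vecNorm (M *ᵥ v) ≤ frobNorm M * vecNorm v := by
  refine abs_le_of_sq_le_sq' ?_ (mul_nonneg (fn_nonneg _) (vn_nonneg _)) |>.2
  rw [mul_pow, fn_sq_rows, Finset.sum_mul, vn_sq, dotProduct]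
  refine Finset.sum_le_sum fun i _ => ?_
  rw [← pow_two, ← mul_pow]
  exact sq_le_sq' (abs_le.1 (abs_dot_le (M i) v)).1 (abs_le.1 (abs_dot_le (M i) v)).2

theorem vn_transpose_mulVec_le (M : Matrix m n ℝ) (v : m → ℝ) :
    vecNorm (Mᵀ *ᵥ v) ≤ frobNorm M * vecNorm v := by
  rw [← fn_transpose]; exact vn_mulVec_le _ _

theorem dot_mulVec_transpose (M : Matrix m n ℝ) (v : m → ℝ) (u : n → ℝ) :
    (Mᵀ *ᵥ v) ⬝ᵥ u = v ⬝ᵥ (M *ᵥ u) := by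
  rw [mulVec_transpose, dotProduct_mulVec]

theorem fn_sq_update (A : Matrix m n ℝ) (a : m → ℝ) (b : n → ℝ) (c : ℝ) :
    frobNorm (A - c • vecMulVec a b) ^ 2 =
      frobNorm A ^ 2 - 2 * c * (a ⬝ᵥ (A *ᵥ b)) + c ^ 2 * (vecNorm a ^ 2 * vecNorm b ^ 2) := by
  have h : ∀ i, (A - c • vecMulVec a b) i = A i - (c * a i) • b := by
    intro i; ext j; simp [vecMulVec_apply]; ring
  simp only [fn_sq_rows, h, vn_sq_sub_smul, Finset.sum_add_distrib, Finset.sum_sub_distrib]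
  congr 1
  · congr 1
    simp only [dotProduct, Finset.mul_sum, mulVec]
    refine Finset.sum_congr rfl fun i _ => Finset.sum_congr rfl fun j _ => ?_
    ring
  · rw [vn_sq a, dotProduct, Finset.sum_mul, Finset.mul_sum]
    refine Finset.sum_congr rfl fun i _ => ?_
    ring

theorem fn_vecMulVec (a : m → ℝ) (b : n → ℝ) :
    frobNorm (vecMulVec a b) = vecNorm a * vecNorm b := by
  have h := fn_sq_update (0 : Matrix m n ℝ) a b (-1)
  have h0 : frobNorm (0 : Matrix m n ℝ) = 0 := by simp [frobNorm]
  rw [h0] at h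
  refine (pow_left_inj₀ (fn_nonneg _) (mul_nonneg (vn_nonneg _) (vn_nonneg _)) two_ne_zero).1 ?_
  rw [mul_pow]
  simpa using h

end Norms

/-! ### Partial products of the layers -/

section Network

variable {dim : ℕ → ℕ}

/-- The output-side factor `W_kᵀ ⋯ W_{L-1}ᵀ 1 ∈ ℝ^{dim k}` of the network, as a vector. -/
def av (L : ℕ) (W : Layers dim) (k : ℕ) : Fin (dim k) → ℝ := fun j => ∑ i, prodFrom L W k i j

/-- The input-side factor `W_{k-1} ⋯ W_0 g ∈ ℝ^{dim k}` applied to a vector `g`. -/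
def bv (W : Layers dim) (g : Fin (dim 0) → ℝ) (k : ℕ) : Fin (dim k) → ℝ := prodUpTo W k *ᵥ g

theorem av_eq (L : ℕ) (W : Layers dim) (k : ℕ) : av L W k = (prodFrom L W k)ᵀ *ᵥ 1 := by
  ext j; simp [av, mulVec, dotProduct]

theorem av_step {L : ℕ} (W : Layers dim) {k : ℕ} (h : k < L) :
    av L W k = (W k)ᵀ *ᵥ av L W (k + 1) := by
  rw [av_eq, av_eq, prodFrom, dif_pos h, transpose_mul, mulVec_mulVec]

theorem prodFrom_top (L : ℕ) (W : Layers dim) : prodFrom L W L = 1 := by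
  rw [prodFrom, dif_neg (lt_irrefl _)]
  ext i j
  simp [Matrix.one_apply, Fin.ext_iff]

theorem av_top (L : ℕ) (W : Layers dim) : av L W L = 1 := by
  rw [av_eq, prodFrom_top]; simp

theorem vn_av_top {L : ℕ} (hd : dim L = 1) (W : Layers dim) : vecNorm (av L W L) = 1 := by
  rw [av_top]; simp [vecNorm, hd]

theorem prodFrom_mul_prodUpTo {L : ℕ} (W : Layers dim) {j : ℕ} (h : j ≤ L) :
    prodFrom L W j * prodUpTo W j = prodUpTo W L := by
  induction h using Nat.decreasingInduction with
  | self => rw [prodFrom_top, Matrix.one_mul]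
  | of_succ k hk ih =>
    rw [prodFrom, dif_pos hk, Matrix.mul_assoc]; exact ih

theorem wprod_eq_av (L : ℕ) (W : Layers dim) : wprod L W = av L W 0 := by
  have := prodFrom_mul_prodUpTo W (Nat.zero_le L)
  rw [prodUpTo, Matrix.mul_one] at this
  ext j
  simp only [av, this, wprod]

theorem bv_zero (W : Layers dim) (g : Fin (dim 0) → ℝ) : bv W g 0 = g := by
  simp [bv, prodUpTo]

theorem bv_succ (W : Layers dim) (g : Fin (dim 0) → ℝ) (k : ℕ) :
    bv W g (k + 1) = W k *ᵥ bv W g k := by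
  simp [bv, prodUpTo, mulVec_mulVec]

/-- Each layer gradient of a network with scalar output has rank one. -/
theorem gradLayer_eq (L : ℕ) (ℓ' : ℝ → ℝ) {n : ℕ} (z : Fin n → Fin (dim 0) → ℝ)
    (W : Layers dim) (k : ℕ) :
    gradLayer L ℓ' z W k =
      vecMulVec (av L W (k + 1)) (bv W (gradRiskV ℓ' z (wprod L W)) k) := by
  ext i j
  simp only [gradLayer, mul_apply, transpose_apply, of_apply, vecMulVec_apply, av, bv, mulVec,
    dotProduct, Finset.mul_sum, ← Finset.sum_mul]
  refine Finset.sum_congr rfl fun l _ => ?_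
  ring

theorem av_dot_bv {L : ℕ} (W : Layers dim) (g : Fin (dim 0) → ℝ) {k : ℕ} (h : k ≤ L) :
    av L W k ⬝ᵥ bv W g k = wprod L W ⬝ᵥ g := by
  induction k with
  | zero => rw [wprod_eq_av, bv_zero]
  | succ k ih =>
    rw [← ih (by omega), av_step W (by omega : k < L), dot_mulVec_transpose, bv_succ]

theorem vn_av_le {L : ℕ} (hd : dim L = 1) (W : Layers dim) {R : ℝ} (hR : 0 ≤ R)
    (hW : ∀ k < L, frobNorm (W k) ≤ R) {k : ℕ} (h : k ≤ L) :
    vecNorm (av L W k) ≤ R ^ (L - k) := by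
  induction h using Nat.decreasingInduction with
  | self => simp [vn_av_top hd]
  | of_succ k hk ih =>
    rw [av_step W hk, show L - k = (L - (k + 1)) + 1 by omega, pow_succ']
    exact (vn_transpose_mulVec_le _ _).trans
      (mul_le_mul (hW k hk) ih (vn_nonneg _) hR)

theorem vn_bv_le {L : ℕ} (W : Layers dim) (g : Fin (dim 0) → ℝ) {R : ℝ} (hR : 0 ≤ R)
    (hW : ∀ k < L, frobNorm (W k) ≤ R) {k : ℕ} (h : k ≤ L) :
    vecNorm (bv W g k) ≤ R ^ k * vecNorm g := by
  induction k with
  | zero => simp [bv_zero]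
  | succ k ih =>
    rw [bv_succ, pow_succ', mul_assoc]
    exact (vn_mulVec_le _ _).trans
      (mul_le_mul (hW k (by omega)) (ih (by omega)) (vn_nonneg _) hR)

theorem vn_wprod_le {L : ℕ} (hd : dim L = 1) (W : Layers dim) :
    vecNorm (wprod L W) ≤ ∏ k ∈ Finset.range L, frobNorm (W k) := by
  have key : ∀ k ≤ L, vecNorm (wprod L W) ≤
      (∏ i ∈ Finset.range k, frobNorm (W i)) * vecNorm (av L W k) := by
    intro k
    induction k with
    | zero => intro _; simp [wprod_eq_av]
    | succ k ih =>
      intro hk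
      refine (ih (by omega)).trans ?_
      rw [Finset.prod_range_succ, mul_assoc, av_step W (by omega : k < L)]
      exact mul_le_mul_of_nonneg_left (vn_transpose_mulVec_le _ _)
        (Finset.prod_nonneg fun _ _ => fn_nonneg _)
  simpa [vn_av_top hd] using key L le_rfl

/-- Perturbing every layer by `Δ k` inside the ball of radius `R` moves `av` by at most
`R ^ (L - j - 1) * ∑ ‖Δ k‖`; the inequality is multiplied by `R` to avoid the exponent `-1`
at `j = L`. -/
theorem vn_av_sub_le {L : ℕ} (hd : dim L = 1) (W W' : Layers dim) {R : ℝ} (hR : 0 ≤ R)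
    (hW : ∀ k < L, frobNorm (W k) ≤ R) (hW' : ∀ k < L, frobNorm (W' k) ≤ R) {j : ℕ} (h : j ≤ L) :
    R * vecNorm (av L W' j - av L W j) ≤
      R ^ (L - j) * ∑ i ∈ Finset.Ico j L, frobNorm (W' i - W i) := by
  induction h using Nat.decreasingInduction with
  | self => simp [av_top, vn_zero]
  | of_succ k hk ih =>
    have e : av L W' k - av L W k = (W' k)ᵀ *ᵥ (av L W' (k + 1) - av L W (k + 1))
        + (W' k - W k)ᵀ *ᵥ av L W (k + 1) := by
      rw [av_step W hk, av_step W' hk, mulVec_sub, transpose_sub, sub_mulVec]; abel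
    have h1 := vn_transpose_mulVec_le (W' k) (av L W' (k + 1) - av L W (k + 1))
    have h2 := vn_transpose_mulVec_le (W' k - W k) (av L W (k + 1))
    have h3 := mul_le_mul_of_nonneg_left (vn_av_le hd W hR hW (k := k + 1) hk)
      (fn_nonneg (W' k - W k))
    have h4 := mul_le_mul_of_nonneg_right (hW' k hk) (vn_nonneg (av L W' (k + 1) - av L W (k + 1)))
    have h5 := vn_add_le ((W' k)ᵀ *ᵥ (av L W' (k + 1) - av L W (k + 1)))
      ((W' k - W k)ᵀ *ᵥ av L W (k + 1))
    rw [Finset.sum_eq_sum_Ico_succ_bot hk, show L - k = (L - (k + 1)) + 1 by omega, pow_succ', e]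
    calc _ ≤ R * (R ^ (L - (k + 1)) * (∑ i ∈ Finset.Ico (k + 1) L, frobNorm (W' i - W i))
            + frobNorm (W' k - W k) * R ^ (L - (k + 1))) :=
          mul_le_mul_of_nonneg_left (by linarith) hR
      _ = _ := by ring

/-- Telescoping along the layers: an exact formula for the change of `⟨w_prod, g⟩`. -/
theorem wprod_sub_dot {L : ℕ} (W W' : Layers dim) (g : Fin (dim 0) → ℝ) :
    (wprod L W' - wprod L W) ⬝ᵥ g =
      ∑ k ∈ Finset.range L, av L W' (k + 1) ⬝ᵥ ((W' k - W k) *ᵥ bv W g k) := by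
  have key : ∀ k ≤ L, wprod L W' ⬝ᵥ g = av L W' k ⬝ᵥ bv W g k +
      ∑ i ∈ Finset.range k, av L W' (i + 1) ⬝ᵥ ((W' i - W i) *ᵥ bv W g i) := by
    intro k
    induction k with
    | zero => intro _; simp [wprod_eq_av, bv_zero]
    | succ k ih =>
      intro hk
      rw [ih (by omega), Finset.sum_range_succ, av_step W' (by omega : k < L),
        dot_mulVec_transpose, bv_succ, sub_mulVec, dotProduct_sub]
      ring
  rw [sub_dotProduct, key L le_rfl, av_top, ← av_top L W, av_dot_bv W g le_rfl]
  simp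

end Network

/-! ### The logistic loss and its risk -/

section Logistic

/-- The logistic loss. -/
def lg (s : ℝ) : ℝ := Real.log (1 + Real.exp (-s))

/-- The derivative of the logistic loss. -/
def lg' (s : ℝ) : ℝ := -Real.exp (-s) / (1 + Real.exp (-s))

theorem lg_hasDerivAt (s : ℝ) : HasDerivAt lg (lg' s) s := by
  have h1 : HasDerivAt (fun s : ℝ => 1 + Real.exp (-s)) (-Real.exp (-s)) s := by
    simpa using ((Real.hasDerivAt_exp (-s)).comp s (hasDerivAt_neg s)).const_add 1
  exact h1.log (by positivity)

theorem lg'_neg (s : ℝ) : lg' s < 0 :=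
  div_neg_of_neg_of_pos (neg_neg_of_pos (Real.exp_pos _)) (by positivity)

theorem lg_pos (s : ℝ) : 0 < lg s := Real.log_pos (by linarith [Real.exp_pos (-s)])

theorem neg_lg'_le_one (s : ℝ) : -lg' s ≤ 1 := by
  rw [lg', neg_div, neg_neg, div_le_one (by positivity)]; linarith

theorem abs_lg'_le_one (s : ℝ) : |lg' s| ≤ 1 := by
  rw [abs_of_neg (lg'_neg s)]; exact neg_lg'_le_one s

theorem neg_lg'_le_exp (s : ℝ) : -lg' s ≤ Real.exp (-s) := by
  rw [lg', neg_div, neg_neg]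
  exact div_le_self (Real.exp_pos _).le (by linarith [Real.exp_pos (-s)])

theorem half_exp_le_neg_lg' {s : ℝ} (hs : 0 ≤ s) : Real.exp (-s) / 2 ≤ -lg' s := by
  rw [lg', neg_div, neg_neg]
  have : Real.exp (-s) ≤ 1 := Real.exp_le_one_iff.2 (by linarith)
  exact div_le_div_of_nonneg_left (Real.exp_pos _).le (by positivity) (by linarith)

theorem half_le_neg_lg' {s : ℝ} (hs : s ≤ 0) : 1 / 2 ≤ -lg' s := by
  rw [lg', neg_div, neg_neg, div_le_div_iff₀ (by norm_num) (by positivity)]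
  have : 1 ≤ Real.exp (-s) := Real.one_le_exp (by linarith)
  linarith

theorem neg_lg'_eq (s : ℝ) : -lg' s = 1 - Real.exp (-lg s) := by
  rw [lg, Real.exp_neg (Real.log _), Real.exp_log (by positivity), lg']
  field_simp
  ring

theorem lg_antitone : Antitone lg :=
  antitone_of_deriv_nonpos (fun s => (lg_hasDerivAt s).differentiableAt)
    fun s => by rw [(lg_hasDerivAt s).deriv]; exact (lg'_neg s).le

theorem lg_mvt (a b : ℝ) : ∃ c, |c - a| ≤ |b - a| ∧ lg b - lg a = lg' c * (b - a) := by
  rcases lt_trichotomy a b with h | h | h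
  · obtain ⟨c, hc, e⟩ := exists_hasDerivAt_eq_slope lg lg' h
      (fun x _ => (lg_hasDerivAt x).continuousAt.continuousWithinAt) fun x _ => lg_hasDerivAt x
    refine ⟨c, ?_, ?_⟩
    · rw [abs_of_pos (by linarith [hc.1]), abs_of_pos (by linarith)]; linarith [hc.2]
    · rw [e, div_mul_cancel₀]; linarith
  · exact ⟨a, by simp, by simp [h]⟩
  · obtain ⟨c, hc, e⟩ := exists_hasDerivAt_eq_slope lg lg' h
      (fun x _ => (lg_hasDerivAt x).continuousAt.continuousWithinAt) fun x _ => lg_hasDerivAt x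
    refine ⟨c, ?_, ?_⟩
    · rw [abs_of_neg (by linarith [hc.2]), abs_of_neg (by linarith)]; linarith [hc.1]
    · have : a - b ≠ 0 := by linarith
      rw [e, div_mul_eq_mul_div, eq_div_iff this]; ring

theorem lg_lipschitz (a b : ℝ) : |lg b - lg a| ≤ |b - a| := by
  obtain ⟨c, -, e⟩ := lg_mvt a b
  rw [e, abs_mul]
  exact mul_le_of_le_one_left (abs_nonneg _) (abs_lg'_le_one c)

theorem lg_smooth {β : ℝ} (hβ : ∀ a b : ℝ, |lg' a - lg' b| ≤ β * |a - b|) (hβ0 : 0 ≤ β)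
    (a b : ℝ) : lg b ≤ lg a + lg' a * (b - a) + β * (b - a) ^ 2 := by
  obtain ⟨c, hc, e⟩ := lg_mvt a b
  have h1 : (lg' c - lg' a) * (b - a) ≤ β * (b - a) ^ 2 := by
    refine (le_abs_self _).trans ?_
    rw [abs_mul, ← sq_abs (b - a), pow_two, ← mul_assoc]
    exact mul_le_mul_of_nonneg_right ((hβ c a).trans (mul_le_mul_of_nonneg_left hc hβ0))
      (abs_nonneg _)
  linarith

variable {n d : ℕ}

theorem riskV_nonneg (z : Fin n → Fin d → ℝ) (w : Fin d → ℝ) : 0 ≤ riskV lg z w :=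
  mul_nonneg (by positivity) (Finset.sum_nonneg fun _ _ => (lg_pos _).le)

theorem gradRiskV_dot (ℓ' : ℝ → ℝ) (z : Fin n → Fin d → ℝ) (w v : Fin d → ℝ) :
    v ⬝ᵥ gradRiskV ℓ' z w = (n : ℝ)⁻¹ * ∑ i, ℓ' (w ⬝ᵥ z i) * (v ⬝ᵥ z i) := by
  simp [gradRiskV, dotProduct_smul, dotProduct_sum]

theorem mean_le (hn : 0 < n) {f : Fin n → ℝ} {c : ℝ} (h : ∀ i, f i ≤ c) :
    (n : ℝ)⁻¹ * ∑ i, f i ≤ c := by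
  have hn' : (0 : ℝ) < n := by exact_mod_cast hn
  rw [inv_mul_le_iff₀ hn']
  calc _ ≤ ∑ _i : Fin n, c := Finset.sum_le_sum fun i _ => h i
    _ = _ := by simp

theorem le_mean (hn : 0 < n) {f : Fin n → ℝ} {c : ℝ} (h : ∀ i, c ≤ f i) :
    c ≤ (n : ℝ)⁻¹ * ∑ i, f i := by
  have := mean_le hn (f := fun i => - f i) (c := -c) fun i => neg_le_neg (h i)
  simp only [Finset.sum_neg_distrib] at this
  linarith

theorem vn_gradRiskV_le (hn : 0 < n) {z : Fin n → Fin d → ℝ} (hz : ∀ i, vecNorm (z i) ≤ 1)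
    {G : ℝ} (hG : ∀ a, |lg' a| ≤ G) (w : Fin d → ℝ) : vecNorm (gradRiskV lg' z w) ≤ G := by
  rw [gradRiskV, vn_smul, abs_of_nonneg (by positivity)]
  refine (mul_le_mul_of_nonneg_left (vn_sum_le _ _) (by positivity)).trans ?_
  refine mean_le hn fun i => ?_
  rw [vn_smul]
  exact (mul_le_of_le_one_right (abs_nonneg _) (hz i)).trans (hG _)

theorem riskV_smooth (hn : 0 < n) {z : Fin n → Fin d → ℝ} (hz : ∀ i, vecNorm (z i) ≤ 1)
    {β : ℝ} (hβ : ∀ a b : ℝ, |lg' a - lg' b| ≤ β * |a - b|) (hβ0 : 0 ≤ β) (w w' : Fin d → ℝ) :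
    riskV lg z w' ≤ riskV lg z w + (w' - w) ⬝ᵥ gradRiskV lg' z w + β * vecNorm (w' - w) ^ 2 := by
  rw [gradRiskV_dot, riskV, riskV, ← mul_add, ← Finset.sum_add_distrib, ← sub_le_iff_le_add',
    ← mul_sub, ← Finset.sum_sub_distrib]
  refine mean_le hn fun i => ?_
  have h := lg_smooth hβ hβ0 (w ⬝ᵥ z i) (w' ⬝ᵥ z i)
  rw [← sub_dotProduct] at h
  have h2 : ((w' - w) ⬝ᵥ z i) ^ 2 ≤ vecNorm (w' - w) ^ 2 := by
    rw [← sq_abs]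
    exact pow_le_pow_left₀ (abs_nonneg _) ((abs_dot_le _ _).trans
      (mul_le_of_le_one_right (vn_nonneg _) (hz i))) 2
  linarith [mul_le_mul_of_nonneg_left h2 hβ0]

/-- The risk is 1-Lipschitz, so risk below `lg 0` keeps the predictor away from the origin. -/
theorem lg_zero_sub_riskV_le (hn : 0 < n) {z : Fin n → Fin d → ℝ} (hz : ∀ i, vecNorm (z i) ≤ 1)
    (w : Fin d → ℝ) : lg 0 - riskV lg z w ≤ vecNorm w := by
  have : lg 0 - vecNorm w ≤ riskV lg z w := le_mean hn fun i => by
    have h := (abs_le.1 (lg_lipschitz 0 (w ⬝ᵥ z i))).1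
    have h2 := (abs_dot_le w (z i)).trans (mul_le_of_le_one_right (vn_nonneg _) (hz i))
    rw [sub_zero] at h
    linarith
  linarith

theorem lg_le_riskV (hn : 0 < n) {z : Fin n → Fin d → ℝ} (hz : ∀ i, vecNorm (z i) ≤ 1)
    {w : Fin d → ℝ} {B : ℝ} (hw : vecNorm w ≤ B) : lg B ≤ riskV lg z w :=
  le_mean hn fun i => lg_antitone ((dot_le w (z i)).trans
    ((mul_le_of_le_one_right (vn_nonneg _) (hz i)).trans hw))

theorem pos_of_riskV_lt (hn : 0 < n) {z : Fin n → Fin d → ℝ} {w : Fin d → ℝ}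
    (h : riskV lg z w < lg 0 / n) (i : Fin n) : 0 < w ⬝ᵥ z i := by
  by_contra! hc
  have hn' : (0 : ℝ) < n := by exact_mod_cast hn
  have h1 : lg 0 ≤ ∑ i, lg (w ⬝ᵥ z i) := (lg_antitone hc).trans
    (Finset.single_le_sum (f := fun i => lg (w ⬝ᵥ z i)) (fun _ _ => (lg_pos _).le)
      (Finset.mem_univ i))
  rw [riskV, inv_mul_eq_div, div_lt_div_iff_of_pos_right hn'] at h
  linarith

/-- By separability the gradient is bounded below as long as the risk is. -/
theorem le_vn_gradRiskV (hn : 0 < n) {z : Fin n → Fin d → ℝ} {γ : ℝ} (hγ : 0 < γ)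
    {ubar : Fin d → ℝ} (hu : vecNorm ubar = 1) (hm : ∀ i, γ ≤ ubar ⬝ᵥ z i)
    {w : Fin d → ℝ} {ε : ℝ} (hε : ε ≤ riskV lg z w) :
    γ * (1 - Real.exp (-ε)) / n ≤ vecNorm (gradRiskV lg' z w) := by
  have hn' : (0 : ℝ) < n := by exact_mod_cast hn
  obtain ⟨i, hi⟩ : ∃ i, ε ≤ lg (w ⬝ᵥ z i) := by
    by_contra! hc
    have : riskV lg z w < ε := by
      rw [riskV, inv_mul_lt_iff₀ hn']
      calc _ < ∑ _i : Fin n, ε := Finset.sum_lt_sum_of_nonempty ⟨⟨0, hn⟩, Finset.mem_univ _⟩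
            fun i _ => hc i
        _ = _ := by simp
    linarith
  have h1 := dot_le (-ubar) (gradRiskV lg' z w)
  have h2 : vecNorm (-ubar) = 1 := by rw [← hu]; simp [vecNorm]
  rw [h2, one_mul] at h1
  refine le_trans ?_ h1
  rw [gradRiskV_dot, div_eq_inv_mul]
  refine mul_le_mul_of_nonneg_left ?_ (by positivity)
  have h3 : ∀ j, 0 ≤ lg' (w ⬝ᵥ z j) * (-ubar ⬝ᵥ z j) := fun j => by
    rw [neg_dotProduct]; nlinarith [lg'_neg (w ⬝ᵥ z j), hm j]
  refine le_trans ?_ (Finset.single_le_sum (fun j _ => h3 j) (Finset.mem_univ i))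
  have h4 : Real.exp (-lg (w ⬝ᵥ z i)) ≤ Real.exp (-ε) := Real.exp_le_exp.2 (by linarith)
  have h5 := neg_lg'_eq (w ⬝ᵥ z i)
  rw [neg_dotProduct]
  nlinarith [lg'_neg (w ⬝ᵥ z i), hm i]

/-- If `c = ⟨w, ū⟩ ≥ 0` and the component `r` of `w` orthogonal to `ū` is long, the gradient
points outwards along `r`: a support vector with `⟨r, z⟩ ≤ -α ‖r‖` dominates, in the exponentially
weighted sum, all the examples with `⟨r, z⟩ > 0`. -/
theorem projPerp_dot_grad_nonneg (hn : 0 < n) {z : Fin n → Fin d → ℝ} {γ α : ℝ} (hγ : 0 < γ)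
    (hα : 0 < α) {ubar : Fin d → ℝ} (hu : vecNorm ubar = 1) (hm : ∀ i, γ ≤ ubar ⬝ᵥ z i)
    (ha : ∀ ξ : Fin d → ℝ, ξ ⬝ᵥ ubar = 0 → ∃ i, ubar ⬝ᵥ z i = γ ∧ α * vecNorm ξ ≤ ξ ⬝ᵥ z i)
    {w : Fin d → ℝ} (hc : 0 ≤ w ⬝ᵥ ubar) (hr : 2 * n / α ≤ vecNorm (projPerp ubar w)) :
    0 ≤ projPerp ubar w ⬝ᵥ gradRiskV lg' z w := by
  set r := projPerp ubar w with hrdef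
  set c := w ⬝ᵥ ubar with hcdef
  have hw : w = c • ubar + r := by rw [hrdef, projPerp]; abel
  have hwz : ∀ i, w ⬝ᵥ z i = c * (ubar ⬝ᵥ z i) + r ⬝ᵥ z i := fun i => by
    rw [hw, add_dotProduct, smul_dotProduct, smul_eq_mul]
  have hru : r ⬝ᵥ ubar = 0 := by
    rw [hrdef, projPerp, sub_dotProduct, smul_dotProduct, ← vn_sq, hu]; simp
  obtain ⟨i, hi, hi2⟩ := ha (-r) (by rw [neg_dotProduct, hru, neg_zero])
  have hn2 : vecNorm (-r) = vecNorm r := by simp [vecNorm]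
  rw [hn2, neg_dotProduct] at hi2
  have hαr : 2 * n ≤ α * vecNorm r := by rwa [div_le_iff₀' hα] at hr
  have hn' : (1 : ℝ) ≤ n := by exact_mod_cast hn
  set E := Real.exp (-(c * γ)) with hE
  have hE0 : 0 < E := Real.exp_pos _
  have hE1 : E ≤ 1 := Real.exp_le_one_iff.2 (by nlinarith)
  have hother : ∀ j, -E ≤ lg' (w ⬝ᵥ z j) * (r ⬝ᵥ z j) := by
    intro j
    by_cases hj : r ⬝ᵥ z j ≤ 0
    · nlinarith [lg'_neg (w ⬝ᵥ z j)]
    · push Not at hj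
      have h1 := neg_lg'_le_exp (w ⬝ᵥ z j)
      have h2 : Real.exp (-(w ⬝ᵥ z j)) ≤ E * Real.exp (-(r ⬝ᵥ z j)) := by
        rw [hE, ← Real.exp_add, Real.exp_le_exp, hwz]
        nlinarith [hm j]
      -- `q * exp (-q) ≤ 1`
      have h3 : Real.exp (-(r ⬝ᵥ z j)) * (r ⬝ᵥ z j) ≤ 1 := by
        rw [Real.exp_neg, inv_mul_le_iff₀ (Real.exp_pos _)]
        linarith [Real.add_one_le_exp (r ⬝ᵥ z j)]
      nlinarith [mul_le_mul_of_nonneg_right (h1.trans h2) hj.le]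
  have hmain : n * E ≤ lg' (w ⬝ᵥ z i) * (r ⬝ᵥ z i) := by
    have hq : α * vecNorm r / 2 * (2 * -lg' (w ⬝ᵥ z i)) ≤ lg' (w ⬝ᵥ z i) * (r ⬝ᵥ z i) := by
      nlinarith [lg'_neg (w ⬝ᵥ z i)]
    have hp : E ≤ 2 * -lg' (w ⬝ᵥ z i) := by
      rcases le_total (w ⬝ᵥ z i) 0 with h | h
      · linarith [half_le_neg_lg' h]
      · have h1 := half_exp_le_neg_lg' h
        have h2 : E ≤ Real.exp (-(w ⬝ᵥ z i)) := by
          rw [hE, Real.exp_le_exp, hwz, hi]; nlinarith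
        linarith
    nlinarith
  rw [gradRiskV_dot]
  refine mul_nonneg (by positivity) ?_
  rw [← Finset.add_sum_erase _ _ (Finset.mem_univ i)]
  have h6 : -(n * E) ≤ ∑ j ∈ Finset.univ.erase i, lg' (w ⬝ᵥ z j) * (r ⬝ᵥ z j) := by
    calc -(n * E) ≤ ∑ _j ∈ (Finset.univ : Finset (Fin n)).erase i, -E := by
          rw [Finset.sum_const, Finset.card_erase_of_mem (Finset.mem_univ i)]
          simp only [Finset.card_univ, Fintype.card_fin, nsmul_eq_mul]
          rw [Nat.cast_sub hn]; push_cast; nlinarith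
      _ ≤ _ := Finset.sum_le_sum fun j _ => hother j
  linarith

/-- `α > 0` produces, for every direction orthogonal to `ū`, a support vector that has a
proportionally large inner product with it. -/
theorem exists_support {z : Fin n → Fin d → ℝ} {γ : ℝ} {ubar : Fin d → ℝ}
    (hu : vecNorm ubar = 1) (hm : ∀ i, γ ≤ ubar ⬝ᵥ z i)
    (hmax : ∀ u' : Fin d → ℝ, vecNorm u' = 1 → ∃ i, u' ⬝ᵥ z i ≤ γ)
    (halpha : 0 < alphaConst z ubar γ) (ξ : Fin d → ℝ) (hξ : ξ ⬝ᵥ ubar = 0) :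
    ∃ i, ubar ⬝ᵥ z i = γ ∧ alphaConst z ubar γ * vecNorm ξ ≤ ξ ⬝ᵥ z i := by
  obtain ⟨i₀, hi₀⟩ := hmax ubar hu
  have hi₀ := le_antisymm hi₀ (hm i₀)
  by_cases h0 : vecNorm ξ = 0
  · exact ⟨i₀, hi₀, by rw [h0, vn_eq_zero h0]; simp⟩
  have hpos : 0 < vecNorm ξ := lt_of_le_of_ne (vn_nonneg _) (Ne.symm h0)
  set ζ := (vecNorm ξ)⁻¹ • ξ with hζ
  have hζ1 : vecNorm ζ = 1 := by
    rw [hζ, vn_smul, abs_of_pos (inv_pos.2 hpos), inv_mul_cancel₀ h0]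
  have hbdd : BddBelow {c : ℝ | ∃ ξ : Fin d → ℝ, vecNorm ξ = 1 ∧ ξ ⬝ᵥ ubar = 0 ∧
      c = sSup {r : ℝ | ∃ i : Fin n, ubar ⬝ᵥ z i = γ ∧ r = ξ ⬝ᵥ z i}} := by
    by_contra h
    -- the infimum of a set that is unbounded below is the junk value `0`
    rw [alphaConst, Real.sInf_of_not_bddBelow h] at halpha
    exact lt_irrefl _ halpha
  have h1 : alphaConst z ubar γ ≤ sSup {r : ℝ | ∃ i : Fin n, ubar ⬝ᵥ z i = γ ∧ r = ζ ⬝ᵥ z i} :=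
    csInf_le hbdd ⟨ζ, hζ1, by rw [hζ, smul_dotProduct, hξ, smul_zero], rfl⟩
  have hfin : {r : ℝ | ∃ i : Fin n, ubar ⬝ᵥ z i = γ ∧ r = ζ ⬝ᵥ z i}.Finite :=
    (Set.finite_range fun i => ζ ⬝ᵥ z i).subset fun r ⟨i, _, hr⟩ => ⟨i, hr.symm⟩
  have hne : {r : ℝ | ∃ i : Fin n, ubar ⬝ᵥ z i = γ ∧ r = ζ ⬝ᵥ z i}.Nonempty := ⟨_, i₀, hi₀, rfl⟩
  obtain ⟨i, hi, hr⟩ := hne.csSup_mem hfin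
  refine ⟨i, hi, ?_⟩
  rw [hr, hζ, smul_dotProduct, smul_eq_mul] at h1
  calc _ ≤ (vecNorm ξ)⁻¹ * (ξ ⬝ᵥ z i) * vecNorm ξ := mul_le_mul_of_nonneg_right h1 hpos.le
    _ = _ := by field_simp

end Logistic

/-! ### The descent lemma -/

section Descent

variable {dim : ℕ → ℕ} {L n : ℕ}

theorem fn_gradLayer (L : ℕ) (ℓ' : ℝ → ℝ) (z : Fin n → Fin (dim 0) → ℝ) (W : Layers dim) (k : ℕ) :
    frobNorm (gradLayer L ℓ' z W k) =
      vecNorm (av L W (k + 1)) * vecNorm (bv W (gradRiskV ℓ' z (wprod L W)) k) := by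
  rw [gradLayer_eq, fn_vecMulVec]

theorem fn_gradLayer_le_one (hd : dim L = 1) (hn : 0 < n)
    {z : Fin n → Fin (dim 0) → ℝ} (hz : ∀ i, vecNorm (z i) ≤ 1) {β G : ℝ} (hβ0 : 0 ≤ β)
    (hG : ∀ a, |lg' a| ≤ G) (hG0 : 0 ≤ G) (W : Layers dim) {R η : ℝ} (hR : 1 ≤ R)
    (hW : ∀ k < L, frobNorm (W k) ≤ R - 1) (hη0 : 0 ≤ η)
    (hη : η * (2 * (L : ℝ) ^ 2 * R ^ (2 * L - 2) * (β + G)) ≤ 1) {k : ℕ} (hk : k < L) :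
    η * frobNorm (gradLayer L lg' z W k) ≤ 1 := by
  have hR0 : 0 ≤ R := by linarith
  have hWR : ∀ k < L, frobNorm (W k) ≤ R := fun k hk => (hW k hk).trans (by linarith)
  have hL1 : (1 : ℝ) ≤ L := by exact_mod_cast (by omega : 1 ≤ L)
  set g := gradRiskV lg' z (wprod L W) with hg
  have hgG : vecNorm g ≤ G := vn_gradRiskV_le hn hz hG _
  have h1 : frobNorm (gradLayer L lg' z W k) ≤ R ^ (L - 1) * G := by
    rw [fn_gradLayer]
    calc _ ≤ R ^ (L - (k + 1)) * (R ^ k * vecNorm g) :=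
          mul_le_mul (vn_av_le hd W hR0 hWR hk) (vn_bv_le W g hR0 hWR hk.le)
            (vn_nonneg _) (by positivity)
      _ = R ^ (L - 1) * vecNorm g := by
          rw [← mul_assoc, ← pow_add]; congr 2; omega
      _ ≤ _ := mul_le_mul_of_nonneg_left hgG (by positivity)
  have h2 : R ^ (L - 1) ≤ R ^ (2 * L - 2) := pow_le_pow_right₀ hR (by omega)
  have h3 : R ^ (L - 1) * G ≤ 2 * (L : ℝ) ^ 2 * R ^ (2 * L - 2) * (β + G) := by
    have hp : 0 ≤ R ^ (2 * L - 2) := by positivity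
    have h4 : R ^ (L - 1) * G ≤ R ^ (2 * L - 2) * (β + G) :=
      mul_le_mul h2 (by linarith) hG0 hp
    have h5 : 0 ≤ R ^ (2 * L - 2) * (β + G) := mul_nonneg hp (by linarith)
    have h6 : (1 : ℝ) ≤ 2 * (L : ℝ) ^ 2 := by nlinarith
    nlinarith
  exact (mul_le_mul_of_nonneg_left (h1.trans h3) hη0).trans hη

/-- Sufficient decrease of the risk for a step of size at most `1 / β(R)` from the ball of
radius `R - 1`. -/
theorem descent (hd : dim L = 1) (hL : 1 ≤ L) (hn : 0 < n)
    {z : Fin n → Fin (dim 0) → ℝ} (hz : ∀ i, vecNorm (z i) ≤ 1) {β G : ℝ}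
    (hβ : ∀ a b : ℝ, |lg' a - lg' b| ≤ β * |a - b|) (hβ0 : 0 ≤ β)
    (hG : ∀ a, |lg' a| ≤ G) (hG0 : 0 ≤ G) (W W' : Layers dim) {R η : ℝ} (hR : 1 ≤ R)
    (hW : ∀ k < L, frobNorm (W k) ≤ R - 1) (hη0 : 0 ≤ η)
    (hη : η * (2 * (L : ℝ) ^ 2 * R ^ (2 * L - 2) * (β + G)) ≤ 1)
    (hW' : ∀ k < L, W' k = W k - η • gradLayer L lg' z W k) :
    riskW L lg z W' ≤ riskW L lg z W - η / 2 * gradNormSq L lg' z W := by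
  have hR0 : 0 ≤ R := by linarith
  have hRpos : 0 < R := by linarith
  have hL1 : (1 : ℝ) ≤ L := by exact_mod_cast hL
  have hWR : ∀ k < L, frobNorm (W k) ≤ R := fun k hk => (hW k hk).trans (by linarith)
  have hΔ : ∀ k < L, W' k - W k = -η • gradLayer L lg' z W k := fun k hk => by
    rw [hW' k hk, neg_smul]; abel
  have hΔn : ∀ k < L, frobNorm (W' k - W k) = η * frobNorm (gradLayer L lg' z W k) :=
    fun k hk => by rw [hΔ k hk, fn_smul, abs_neg, abs_of_nonneg hη0]
  have hWR' : ∀ k < L, frobNorm (W' k) ≤ R := fun k hk => by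
    have h1 := fn_add_le (W k) (W' k - W k)
    rw [add_sub_cancel, hΔn k hk] at h1
    linarith [hW k hk, fn_gradLayer_le_one hd hn hz hβ0 hG hG0 W hR hW hη0 hη hk]
  set g := gradRiskV lg' z (wprod L W) with hg
  set S := gradNormSq L lg' z W with hS
  have hgG : vecNorm g ≤ G := vn_gradRiskV_le hn hz hG _
  set s := ∑ i ∈ Finset.range L, frobNorm (W' i - W i) with hs
  have hs0 : 0 ≤ s := Finset.sum_nonneg fun _ _ => fn_nonneg _
  set ρ := R ^ (L - 1) with hρ
  have hρ1 : 1 ≤ ρ := one_le_pow₀ hR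
  have hρ2 : R ^ (2 * L - 2) = ρ ^ 2 := by rw [hρ, ← pow_mul]; congr 1; omega
  -- Cauchy–Schwarz over the layers
  have hs2 : s ^ 2 ≤ L * (η ^ 2 * S) := by
    have h1 := sq_sum_le_card_mul_sum_sq (s := Finset.range L)
      (f := fun i => frobNorm (W' i - W i))
    rw [Finset.card_range] at h1
    have h2 : ∑ i ∈ Finset.range L, frobNorm (W' i - W i) ^ 2 = η ^ 2 * S := by
      rw [hS, gradNormSq, Finset.mul_sum]
      refine Finset.sum_congr rfl fun k hk => ?_
      rw [hΔn k (Finset.mem_range.1 hk), mul_pow]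
    rwa [h2] at h1
  have hw : vecNorm (wprod L W' - wprod L W) ≤ ρ * s := by
    have h1 := vn_av_sub_le hd W W' hR0 hWR hWR' (Nat.zero_le L)
    rw [← wprod_eq_av, ← wprod_eq_av, ← Finset.range_eq_Ico, Nat.sub_zero,
      show L = (L - 1) + 1 by omega, pow_succ', show L - 1 + 1 = L by omega, mul_assoc] at h1
    exact le_of_mul_le_mul_left h1 hRpos
  have hfirst : (wprod L W' - wprod L W) ⬝ᵥ g ≤ -η * S + ρ * G * s ^ 2 := by
    rw [wprod_sub_dot]
    have hterm : ∀ k ∈ Finset.range L, av L W' (k + 1) ⬝ᵥ ((W' k - W k) *ᵥ bv W g k) ≤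
        -η * frobNorm (gradLayer L lg' z W k) ^ 2 + ρ * G * s * frobNorm (W' k - W k) := by
      intro k hk
      have hk := Finset.mem_range.1 hk
      have e1 : av L W (k + 1) ⬝ᵥ ((W' k - W k) *ᵥ bv W g k) =
          -η * frobNorm (gradLayer L lg' z W k) ^ 2 := by
        rw [fn_gradLayer, hΔ k hk, gradLayer_eq, smul_mulVec, dotProduct_smul, vecMulVec_mulVec,
          mul_pow, vn_sq, vn_sq, ← hg]
        simp [dotProduct_smul, mul_comm]
      have h2 := vn_av_sub_le hd W W' hR0 hWR hWR' (j := k + 1) hk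
      have h3 : vecNorm (av L W' (k + 1) - av L W (k + 1)) ≤ R ^ (L - (k + 1)) * s := by
        have h4 : ∑ i ∈ Finset.Ico (k + 1) L, frobNorm (W' i - W i) ≤ s := by
          rw [hs, Finset.range_eq_Ico]
          exact Finset.sum_le_sum_of_subset_of_nonneg (Finset.Ico_subset_Ico_left (Nat.zero_le _))
            fun _ _ _ => fn_nonneg _
        have h5 := vn_nonneg (av L W' (k + 1) - av L W (k + 1))
        have h6 := mul_le_mul_of_nonneg_left h4 (pow_nonneg hR0 (L - (k + 1)))
        nlinarith
      have h4 := vn_bv_le W g hR0 hWR hk.le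
      have h5 : vecNorm (av L W' (k + 1) - av L W (k + 1)) * vecNorm (bv W g k) ≤ ρ * G * s := by
        calc _ ≤ R ^ (L - (k + 1)) * s * (R ^ k * vecNorm g) :=
              mul_le_mul h3 h4 (vn_nonneg _) (by positivity)
          _ = R ^ (L - (k + 1) + k) * s * vecNorm g := by rw [pow_add]; ring
          _ = ρ * s * vecNorm g := by rw [show L - (k + 1) + k = L - 1 by omega]
          _ ≤ ρ * s * G := mul_le_mul_of_nonneg_left hgG (by positivity)
          _ = _ := by ring
      have h6 := dot_le (av L W' (k + 1) - av L W (k + 1)) ((W' k - W k) *ᵥ bv W g k)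
      rw [sub_dotProduct, e1] at h6
      have h7 := mul_le_mul_of_nonneg_left (vn_mulVec_le (W' k - W k) (bv W g k))
        (vn_nonneg (av L W' (k + 1) - av L W (k + 1)))
      have h8 := mul_le_mul_of_nonneg_right h5 (fn_nonneg (W' k - W k))
      linarith
    refine (Finset.sum_le_sum hterm).trans (le_of_eq ?_)
    rw [Finset.sum_add_distrib, ← Finset.mul_sum, ← Finset.mul_sum, ← hs, hS, gradNormSq]
    ring
  have hsm := riskV_smooth hn hz hβ hβ0 (wprod L W) (wprod L W')
  have hw2 : vecNorm (wprod L W' - wprod L W) ^ 2 ≤ ρ ^ 2 * s ^ 2 := by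
    rw [← mul_pow]; exact pow_le_pow_left₀ (vn_nonneg _) hw 2
  have hS0 : 0 ≤ S := Finset.sum_nonneg fun _ _ => sq_nonneg _
  have h9 : ρ * G * s ^ 2 + β * (ρ ^ 2 * s ^ 2) ≤ η / 2 * S := by
    have h10 : ρ * G * s ^ 2 ≤ ρ ^ 2 * G * s ^ 2 := by
      have : ρ ≤ ρ ^ 2 := by nlinarith
      gcongr
    have h11 : ρ ^ 2 * (β + G) * s ^ 2 ≤ ρ ^ 2 * (β + G) * (L * (η ^ 2 * S)) :=
      mul_le_mul_of_nonneg_left hs2 (mul_nonneg (sq_nonneg _) (by linarith))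
    rw [hρ2] at hη
    have h12 : η * (2 * (L : ℝ) * ρ ^ 2 * (β + G)) ≤ 1 := by
      refine le_trans ?_ hη
      have h13 : 0 ≤ ρ ^ 2 * (β + G) := mul_nonneg (sq_nonneg _) (by linarith)
      have h14 : (L : ℝ) ≤ (L : ℝ) ^ 2 := by nlinarith
      have h15 := mul_le_mul_of_nonneg_right h14 h13
      refine mul_le_mul_of_nonneg_left ?_ hη0
      nlinarith
    have h16 := mul_le_mul_of_nonneg_right h12 (mul_nonneg hη0 hS0)
    nlinarith
  have h17 := mul_le_mul_of_nonneg_left hw2 hβ0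
  simp only [riskW]
  linarith

end Descent

/-! ### Balancedness and the near rank-one structure -/

section Balance

variable {dim : ℕ → ℕ} {L n : ℕ}

theorem sq_fn_gradLayer_le (ℓ' : ℝ → ℝ) (z : Fin n → Fin (dim 0) → ℝ) (W : Layers dim)
    {k : ℕ} (hk : k < L) : frobNorm (gradLayer L ℓ' z W k) ^ 2 ≤ gradNormSq L ℓ' z W :=
  Finset.single_le_sum (f := fun k => frobNorm (gradLayer L ℓ' z W k) ^ 2)
    (fun _ _ => sq_nonneg _) (Finset.mem_range.2 hk)

theorem gradNormSq_nonneg (ℓ' : ℝ → ℝ) (z : Fin n → Fin (dim 0) → ℝ) (W : Layers dim) :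
    0 ≤ gradNormSq L ℓ' z W := Finset.sum_nonneg fun _ _ => sq_nonneg _

theorem fn_sq_step (ℓ' : ℝ → ℝ) (z : Fin n → Fin (dim 0) → ℝ) (W W' : Layers dim) {η : ℝ}
    (hW' : ∀ k < L, W' k = W k - η • gradLayer L ℓ' z W k) {k : ℕ} (hk : k < L) :
    frobNorm (W' k) ^ 2 = frobNorm (W k) ^ 2
      - 2 * η * (wprod L W ⬝ᵥ gradRiskV ℓ' z (wprod L W))
      + η ^ 2 * frobNorm (gradLayer L ℓ' z W k) ^ 2 := by
  rw [hW' k hk, fn_gradLayer, mul_pow, gradLayer_eq, fn_sq_update, ← bv_succ, av_dot_bv W _ hk]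

/-- The difference of squared Frobenius norms of adjacent layers is conserved to second order. -/
theorem fn_balance_step (ℓ' : ℝ → ℝ) (z : Fin n → Fin (dim 0) → ℝ) (W W' : Layers dim) {η : ℝ}
    (hW' : ∀ k < L, W' k = W k - η • gradLayer L ℓ' z W k) {k : ℕ} (hk : k + 1 < L) :
    |(frobNorm (W' (k + 1)) ^ 2 - frobNorm (W' k) ^ 2) -
      (frobNorm (W (k + 1)) ^ 2 - frobNorm (W k) ^ 2)| ≤ η ^ 2 * gradNormSq L ℓ' z W := by
  rw [fn_sq_step ℓ' z W W' hW' hk, fn_sq_step ℓ' z W W' hW' (by omega : k < L)]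
  have h1 := mul_le_mul_of_nonneg_left (sq_fn_gradLayer_le ℓ' z W hk) (sq_nonneg η)
  have h2 := mul_le_mul_of_nonneg_left (sq_fn_gradLayer_le ℓ' z W (by omega : k < L)) (sq_nonneg η)
  have h3 := mul_nonneg (sq_nonneg η) (sq_nonneg (frobNorm (gradLayer L ℓ' z W (k + 1))))
  have h4 := mul_nonneg (sq_nonneg η) (sq_nonneg (frobNorm (gradLayer L ℓ' z W k)))
  rw [abs_le]
  constructor <;> linarith

/-- The quadratic form of `W_{k+1}ᵀ W_{k+1} - W_k W_kᵀ` is conserved to second order. -/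
theorem quad_balance_step (ℓ' : ℝ → ℝ) (z : Fin n → Fin (dim 0) → ℝ) (W W' : Layers dim) {η : ℝ}
    (hW' : ∀ k < L, W' k = W k - η • gradLayer L ℓ' z W k) {k : ℕ} (hk : k + 1 < L)
    (v : Fin (dim (k + 1)) → ℝ) :
    |(vecNorm (W' (k + 1) *ᵥ v) ^ 2 - vecNorm ((W' k)ᵀ *ᵥ v) ^ 2) -
      (vecNorm (W (k + 1) *ᵥ v) ^ 2 - vecNorm ((W k)ᵀ *ᵥ v) ^ 2)| ≤
        η ^ 2 * gradNormSq L ℓ' z W * vecNorm v ^ 2 := by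
  have hk' : k < L := by omega
  set b := bv W (gradRiskV ℓ' z (wprod L W)) with hb
  have e1 : W' (k + 1) *ᵥ v = W (k + 1) *ᵥ v - (η * (b (k + 1) ⬝ᵥ v)) • av L W (k + 1 + 1) := by
    rw [hW' _ hk, gradLayer_eq, sub_mulVec, smul_mulVec, vecMulVec_mulVec, mul_smul, ← hb]
    simp
  have e2 : (W' k)ᵀ *ᵥ v = (W k)ᵀ *ᵥ v - (η * (av L W (k + 1) ⬝ᵥ v)) • b k := by
    rw [hW' _ hk', gradLayer_eq, transpose_sub, transpose_smul, transpose_vecMulVec, sub_mulVec,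
      smul_mulVec, vecMulVec_mulVec, mul_smul, ← hb]
    simp
  have e3 : (W (k + 1) *ᵥ v) ⬝ᵥ av L W (k + 1 + 1) = av L W (k + 1) ⬝ᵥ v := by
    rw [av_step W hk, dot_mulVec_transpose, dotProduct_comm]
  have e4 : ((W k)ᵀ *ᵥ v) ⬝ᵥ b k = b (k + 1) ⬝ᵥ v := by
    rw [dot_mulVec_transpose, hb, ← bv_succ, dotProduct_comm]
  rw [e1, e2, vn_sq_sub_smul, vn_sq_sub_smul, e3, e4]
  have c1 : (b (k + 1) ⬝ᵥ v) ^ 2 ≤ vecNorm (b (k + 1)) ^ 2 * vecNorm v ^ 2 := by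
    rw [← sq_abs, ← mul_pow]; exact pow_le_pow_left₀ (abs_nonneg _) (abs_dot_le _ _) 2
  have c2 : (av L W (k + 1) ⬝ᵥ v) ^ 2 ≤ vecNorm (av L W (k + 1)) ^ 2 * vecNorm v ^ 2 := by
    rw [← sq_abs, ← mul_pow]; exact pow_le_pow_left₀ (abs_nonneg _) (abs_dot_le _ _) 2
  have g1 := sq_fn_gradLayer_le ℓ' z W hk
  have g2 := sq_fn_gradLayer_le ℓ' z W hk'
  rw [fn_gradLayer, mul_pow, ← hb] at g1 g2
  have h1 : (η * (b (k + 1) ⬝ᵥ v)) ^ 2 * vecNorm (av L W (k + 1 + 1)) ^ 2 ≤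
      η ^ 2 * gradNormSq L ℓ' z W * vecNorm v ^ 2 := by
    calc _ ≤ η ^ 2 * (vecNorm (b (k + 1)) ^ 2 * vecNorm v ^ 2) *
          vecNorm (av L W (k + 1 + 1)) ^ 2 := by rw [mul_pow]; gcongr
      _ = η ^ 2 * (vecNorm (av L W (k + 1 + 1)) ^ 2 * vecNorm (b (k + 1)) ^ 2) * vecNorm v ^ 2 := by
          ring
      _ ≤ _ := by gcongr
  have h2 : (η * (av L W (k + 1) ⬝ᵥ v)) ^ 2 * vecNorm (b k) ^ 2 ≤
      η ^ 2 * gradNormSq L ℓ' z W * vecNorm v ^ 2 := by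
    calc _ ≤ η ^ 2 * (vecNorm (av L W (k + 1)) ^ 2 * vecNorm v ^ 2) *
          vecNorm (b k) ^ 2 := by rw [mul_pow]; gcongr
      _ = η ^ 2 * (vecNorm (av L W (k + 1)) ^ 2 * vecNorm (b k) ^ 2) * vecNorm v ^ 2 := by
          ring
      _ ≤ _ := by gcongr
  have h3 : 0 ≤ (η * (b (k + 1) ⬝ᵥ v)) ^ 2 * vecNorm (av L W (k + 1 + 1)) ^ 2 := by positivity
  have h4 : 0 ≤ (η * (av L W (k + 1) ⬝ᵥ v)) ^ 2 * vecNorm (b k) ^ 2 := by positivity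
  rw [abs_le]
  constructor <;> linarith

theorem abs_sub_le_of_step {f δ : ℕ → ℝ} (h : ∀ t, |f (t + 1) - f t| ≤ δ t) (T : ℕ) :
    |f T - f 0| ≤ ∑ t ∈ Finset.range T, δ t := by
  rw [← Finset.sum_range_sub f T]
  exact (Finset.abs_sum_le_sum_abs _ _).trans (Finset.sum_le_sum fun t _ => h t)

/-- Balanced layers are nearly of rank one: `‖W_k‖_F² - ‖a_k‖² / ‖a_{k+1}‖²`, the squared distance
from `W_k` to the matrices whose columns are multiples of `a_{k+1}`, stays bounded. The bound grows
by `2 C` with every layer, starting from the top layer, which has a single row. -/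
theorem near_rank_one (hd : dim L = 1) (W : Layers dim) {C : ℝ} (hC : 0 ≤ C)
    (h1 : ∀ k, k + 1 < L → |frobNorm (W (k + 1)) ^ 2 - frobNorm (W k) ^ 2| ≤ C)
    (h2 : ∀ k, k + 1 < L → ∀ v,
      |vecNorm (W (k + 1) *ᵥ v) ^ 2 - vecNorm ((W k)ᵀ *ᵥ v) ^ 2| ≤ C * vecNorm v ^ 2)
    {k : ℕ} (hk : k < L) :
    (frobNorm (W k) ^ 2 - 2 * C * L) * vecNorm (av L W (k + 1)) ^ 2 ≤ vecNorm (av L W k) ^ 2 := by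
  have key : ∀ j k, k + 1 + j = L →
      (frobNorm (W k) ^ 2 - 2 * C * j) * vecNorm (av L W (k + 1)) ^ 2 ≤
        vecNorm (av L W k) ^ 2 := by
    intro j
    induction j with
    | zero =>
      intro k hk
      have hk' : k + 1 = L := hk
      subst hk'
      have e : frobNorm (W k) ^ 2 = vecNorm (av (k + 1) W k) ^ 2 := by
        have hav : ∀ j, av (k + 1) W k j = ∑ i, W k i j := fun j => by
          rw [av_step W (Nat.lt_succ_self k), av_top]; simp [mulVec, dotProduct]
        have : Unique (Fin (dim (k + 1))) := by rw [hd]; infer_instance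
        rw [← fn_transpose, fn_sq_rows, vn_sq, dotProduct]
        refine Finset.sum_congr rfl fun j _ => ?_
        rw [hav, vn_sq]; simp [dotProduct]
      rw [vn_av_top hd, e]; simp
    | succ j ih =>
      intro k hk
      have hk1 : k + 1 < L := by omega
      have i1 := ih (k + 1) (by omega)
      have i2 := (abs_le.1 (h1 k hk1)).1
      have i3 := (abs_le.1 (h2 k hk1 (av L W (k + 1)))).2
      rw [← av_step W (by omega : k < L)] at i3
      -- Cauchy–Schwarz, since `a_{k+1} = W_{k+1}ᵀ a_{k+2}`
      have i4 : vecNorm (av L W (k + 1)) ^ 2 ≤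
          vecNorm (av L W (k + 1 + 1)) * vecNorm (W (k + 1) *ᵥ av L W (k + 1)) := by
        refine le_trans (le_of_eq ?_) (dot_le _ _)
        rw [← dot_mulVec_transpose, ← av_step W hk1, vn_sq]
      set x := vecNorm (av L W (k + 1)) with hx
      set y := vecNorm (av L W (k + 1 + 1)) with hy
      set m := vecNorm (W (k + 1) *ᵥ av L W (k + 1)) with hm
      have hx0 : 0 ≤ x := vn_nonneg _
      have hy0 : 0 ≤ y := vn_nonneg _
      have hm0 : 0 ≤ m := vn_nonneg _
      push_cast
      rcases eq_or_lt_of_le hy0 with h | h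
      · have : x ^ 2 = 0 := le_antisymm (by rw [← h] at i4; simpa using i4) (sq_nonneg x)
        rw [this]; simp [sq_nonneg]
      · have i5 : (frobNorm (W (k + 1)) ^ 2 - 2 * C * j) * x ^ 2 ≤ m ^ 2 := by
          have hy2 : 0 < y ^ 2 := by positivity
          refine le_of_mul_le_mul_left ?_ hy2
          have i6 : (x ^ 2) ^ 2 ≤ (y * m) ^ 2 := pow_le_pow_left₀ (sq_nonneg _) i4 2
          nlinarith [mul_le_mul_of_nonneg_right i1 (sq_nonneg x)]
        nlinarith [mul_le_mul_of_nonneg_right i2 (sq_nonneg x)]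
  obtain ⟨j, rfl⟩ := Nat.exists_eq_add_of_le (Nat.succ_le_of_lt hk)
  refine le_trans (mul_le_mul_of_nonneg_right ?_ (sq_nonneg _)) (key j k rfl)
  push_cast
  nlinarith

/-- `‖A‖_F² - ‖A ū‖²` is the squared Frobenius norm of `A` restricted to the orthogonal complement
of the unit vector `ū`, so it controls the component of `Aᵀ a` orthogonal to `ū`. -/
theorem vn_sq_projPerp_le {m p : ℕ} (A : Matrix (Fin m) (Fin p) ℝ) {ubar : Fin p → ℝ}
    (hu : vecNorm ubar = 1) (a : Fin m → ℝ) :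
    vecNorm (projPerp ubar (Aᵀ *ᵥ a)) ^ 2 ≤
      (frobNorm A ^ 2 - vecNorm (A *ᵥ ubar) ^ 2) * vecNorm a ^ 2 := by
  have e1 := fn_sq_update A (A *ᵥ ubar) ubar 1
  rw [← vn_sq, hu] at e1
  have e2 : projPerp ubar (Aᵀ *ᵥ a) = (A - (1 : ℝ) • vecMulVec (A *ᵥ ubar) ubar)ᵀ *ᵥ a := by
    rw [projPerp, dot_mulVec_transpose, one_smul, transpose_sub, transpose_vecMulVec, sub_mulVec,
      vecMulVec_mulVec, dotProduct_comm a]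
    simp
  have e3 : frobNorm A ^ 2 - vecNorm (A *ᵥ ubar) ^ 2 =
      frobNorm (A - (1 : ℝ) • vecMulVec (A *ᵥ ubar) ubar) ^ 2 := by rw [e1]; ring
  rw [e2, e3, ← mul_pow]
  exact pow_le_pow_left₀ (vn_nonneg _) (vn_transpose_mulVec_le _ _) 2

theorem vn_sq_projPerp {p : ℕ} {ubar : Fin p → ℝ} (hu : vecNorm ubar = 1) (w : Fin p → ℝ) :
    vecNorm (projPerp ubar w) ^ 2 = vecNorm w ^ 2 - (w ⬝ᵥ ubar) ^ 2 := by
  rw [projPerp, vn_sq_sub_smul, hu]; ring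

end Balance

/-! ### Asymptotics of gradient descent -/

/-- Gradient descent for the logistic loss with the step sizes of the theorem, on normalized,
separable data whose maximum-margin direction is `ubar`. -/
structure GDRun (dim : ℕ → ℕ) (L n : ℕ) (z : Fin n → Fin (dim 0) → ℝ) (γ : ℝ)
    (ubar : Fin (dim 0) → ℝ) (β G : ℝ) (W : ℕ → Layers dim) (η Rseq : ℕ → ℝ) : Prop where
  hL : 1 ≤ L
  hd : dim L = 1
  hn : 0 < n
  hz : ∀ i, vecNorm (z i) ≤ 1
  hγ : 0 < γ
  hu : vecNorm ubar = 1
  hm : ∀ i, γ ≤ ubar ⬝ᵥ z i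
  hmax : ∀ u' : Fin (dim 0) → ℝ, vecNorm u' = 1 → ∃ i, u' ⬝ᵥ z i ≤ γ
  hβ : ∀ a b : ℝ, |lg' a - lg' b| ≤ β * |a - b|
  hG : ∀ a : ℝ, |lg' a| ≤ G
  hGD : ∀ t : ℕ, ∀ k < L, W (t + 1) k = W t k - η t • gradLayer L lg' z (W t) k
  hη : ∀ t, η t = min (2 * (L : ℝ) ^ 2 * (Rseq t) ^ (2 * L - 2) * (β + G))⁻¹ 1
  hR1 : ∀ t, 1 ≤ Rseq t
  hRt : ∀ t, ∀ k < L, frobNorm (W t k) ≤ Rseq t - 1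
  hRmono : ∀ t, (∀ k < L, frobNorm (W (t + 1) k) ≤ Rseq t - 1) → Rseq (t + 1) = Rseq t
  hinit_grad : ∃ k < L, gradLayer L lg' z (W 0) k ≠ 0
  hinit_risk : riskW L lg z (W 0) ≤ lg 0
  halpha : 0 < alphaConst z ubar γ

namespace GDRun

variable {dim : ℕ → ℕ} {L n : ℕ} {z : Fin n → Fin (dim 0) → ℝ} {γ : ℝ}
    {ubar : Fin (dim 0) → ℝ} {β G : ℝ} {W : ℕ → Layers dim} {η Rseq : ℕ → ℝ}

theorem G_pos (H : GDRun dim L n z γ ubar β G W η Rseq) : 0 < G :=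
  (abs_pos.2 (lg'_neg 0).ne).trans_le (H.hG 0)

theorem β_nonneg (H : GDRun dim L n z γ ubar β G W η Rseq) : 0 ≤ β := by
  simpa using (abs_nonneg _).trans (H.hβ 1 0)

theorem den_pos (H : GDRun dim L n z γ ubar β G W η Rseq) (t : ℕ) :
    0 < 2 * (L : ℝ) ^ 2 * (Rseq t) ^ (2 * L - 2) * (β + G) := by
  have h1 : (0 : ℝ) < L := by exact_mod_cast H.hL
  have h2 : 0 < Rseq t := by linarith [H.hR1 t]
  have h3 := H.G_pos
  have h4 := H.β_nonneg
  have h5 : 0 < β + G := by linarith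
  positivity

theorem η_pos (H : GDRun dim L n z γ ubar β G W η Rseq) (t : ℕ) : 0 < η t := by
  rw [H.hη]; exact lt_min (inv_pos.2 (H.den_pos t)) one_pos

theorem η_le_one (H : GDRun dim L n z γ ubar β G W η Rseq) (t : ℕ) : η t ≤ 1 := by
  rw [H.hη]; exact min_le_right _ _

theorem η_mul_le (H : GDRun dim L n z γ ubar β G W η Rseq) (t : ℕ) :
    η t * (2 * (L : ℝ) ^ 2 * (Rseq t) ^ (2 * L - 2) * (β + G)) ≤ 1 := by
  rw [← le_div_iff₀ (H.den_pos t), one_div, H.hη]; exact min_le_left _ _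

theorem descent (H : GDRun dim L n z γ ubar β G W η Rseq) (t : ℕ) :
    riskW L lg z (W (t + 1)) ≤ riskW L lg z (W t) - η t / 2 * gradNormSq L lg' z (W t) :=
  _root_.descent H.hd H.hL H.hn H.hz H.hβ H.β_nonneg H.hG H.G_pos.le (W t) (W (t + 1)) (H.hR1 t)
    (H.hRt t) (H.η_pos t).le (H.η_mul_le t) (H.hGD t)

theorem η_grad_le_one (H : GDRun dim L n z γ ubar β G W η Rseq) (t : ℕ) {k : ℕ} (hk : k < L) :
    η t * frobNorm (gradLayer L lg' z (W t) k) ≤ 1 :=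
  fn_gradLayer_le_one H.hd H.hn H.hz H.β_nonneg H.hG H.G_pos.le (W t) (H.hR1 t)
    (H.hRt t) (H.η_pos t).le (H.η_mul_le t) hk

theorem risk_antitone (H : GDRun dim L n z γ ubar β G W η Rseq) :
    Antitone fun t => riskW L lg z (W t) :=
  antitone_nat_of_succ_le fun t => by
    have := mul_nonneg (H.η_pos t).le (gradNormSq_nonneg (L := L) lg' z (W t))
    linarith [H.descent t]

theorem sum_le (H : GDRun dim L n z γ ubar β G W η Rseq) (T : ℕ) :
    ∑ t ∈ Finset.range T, η t * gradNormSq L lg' z (W t) ≤ 2 * riskW L lg z (W 0) := by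
  have : ∑ t ∈ Finset.range T, η t * gradNormSq L lg' z (W t) ≤
      2 * (riskW L lg z (W 0) - riskW L lg z (W T)) := by
    induction T with
    | zero => simp
    | succ T ih => rw [Finset.sum_range_succ]; linarith [H.descent T]
  have h : 0 ≤ riskW L lg z (W T) := riskV_nonneg _ _
  linarith

theorem sum_sq_le (H : GDRun dim L n z γ ubar β G W η Rseq) (T : ℕ) :
    ∑ t ∈ Finset.range T, η t ^ 2 * gradNormSq L lg' z (W t) ≤ 2 * riskW L lg z (W 0) := by
  refine (Finset.sum_le_sum fun t _ => ?_).trans (H.sum_le T)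
  refine mul_le_mul_of_nonneg_right ?_ (gradNormSq_nonneg _ _ _)
  nlinarith [H.η_pos t, H.η_le_one t]

/-- Along the whole run all layers have the same Frobenius norm up to a constant, and each is
nearly of rank one. -/
theorem exists_balance (H : GDRun dim L n z γ ubar β G W η Rseq) :
    ∃ E : ℝ, 0 ≤ E ∧ ∀ t, ∀ k < L,
      |frobNorm (W t k) ^ 2 - frobNorm (W t 0) ^ 2| ≤ E ∧
      (frobNorm (W t k) ^ 2 - E) * vecNorm (av L (W t) (k + 1)) ^ 2 ≤
        vecNorm (av L (W t) k) ^ 2 := by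
  set K := 2 * riskW L lg z (W 0) with hK
  have hK0 : 0 ≤ K := mul_nonneg zero_le_two (riskV_nonneg _ _)
  set C := K + 2 * ∑ i ∈ Finset.range L, frobNorm (W 0 i) ^ 2 with hC
  have hsum : ∀ k < L, frobNorm (W 0 k) ^ 2 ≤ ∑ i ∈ Finset.range L, frobNorm (W 0 i) ^ 2 :=
    fun k hk => Finset.single_le_sum (f := fun i => frobNorm (W 0 i) ^ 2)
      (fun _ _ => sq_nonneg _) (Finset.mem_range.2 hk)
  have hC0 : 0 ≤ C := add_nonneg hK0
    (mul_nonneg zero_le_two (Finset.sum_nonneg fun _ _ => sq_nonneg _))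
  have b1 : ∀ t k, k + 1 < L → |frobNorm (W t (k + 1)) ^ 2 - frobNorm (W t k) ^ 2| ≤ C := by
    intro t k hk
    have h1 := abs_sub_le_of_step (f := fun t => frobNorm (W t (k + 1)) ^ 2 - frobNorm (W t k) ^ 2)
      (fun t => fn_balance_step lg' z (W t) (W (t + 1)) (H.hGD t) hk) t
    have h2 := h1.trans (H.sum_sq_le t)
    have h3 := hsum _ hk
    have h4 := hsum k (by omega)
    have h5 := sq_nonneg (frobNorm (W 0 (k + 1)))
    have h6 := sq_nonneg (frobNorm (W 0 k))
    rw [abs_le] at h2 ⊢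
    constructor <;> linarith [h2.1, h2.2]
  have b2 : ∀ t k, k + 1 < L → ∀ v,
      |vecNorm (W t (k + 1) *ᵥ v) ^ 2 - vecNorm ((W t k)ᵀ *ᵥ v) ^ 2| ≤ C * vecNorm v ^ 2 := by
    intro t k hk v
    have h1 := abs_sub_le_of_step
      (f := fun t => vecNorm (W t (k + 1) *ᵥ v) ^ 2 - vecNorm ((W t k)ᵀ *ᵥ v) ^ 2)
      (fun t => quad_balance_step lg' z (W t) (W (t + 1)) (H.hGD t) hk v) t
    rw [← Finset.sum_mul] at h1
    have hv := sq_nonneg (vecNorm v)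
    have h2 := h1.trans (mul_le_mul_of_nonneg_right (H.sum_sq_le t) hv)
    have h3 := mul_le_mul_of_nonneg_right (hsum _ hk) hv
    have h4 := mul_le_mul_of_nonneg_right (hsum k (by omega)) hv
    have h5 : vecNorm (W 0 (k + 1) *ᵥ v) ^ 2 ≤ frobNorm (W 0 (k + 1)) ^ 2 * vecNorm v ^ 2 := by
      rw [← mul_pow]; exact pow_le_pow_left₀ (vn_nonneg _) (vn_mulVec_le _ _) 2
    have h6 : vecNorm ((W 0 k)ᵀ *ᵥ v) ^ 2 ≤ frobNorm (W 0 k) ^ 2 * vecNorm v ^ 2 := by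
      rw [← mul_pow]; exact pow_le_pow_left₀ (vn_nonneg _) (vn_transpose_mulVec_le _ _) 2
    have h7 := sq_nonneg (vecNorm (W 0 (k + 1) *ᵥ v))
    have h8 := sq_nonneg (vecNorm ((W 0 k)ᵀ *ᵥ v))
    rw [hC, add_mul, mul_assoc]
    rw [abs_le] at h2 ⊢
    constructor <;> linarith [h2.1, h2.2]
  refine ⟨2 * C * L, by positivity, fun t k hk => ⟨?_, near_rank_one H.hd (W t) hC0 (b1 t) (b2 t) hk⟩⟩
  have h1 : ∀ k < L, |frobNorm (W t k) ^ 2 - frobNorm (W t 0) ^ 2| ≤ C * k := by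
    intro k
    induction k with
    | zero => intro _; simp
    | succ k ih =>
      intro hk
      have h2 := abs_le.1 (ih (by omega))
      have h3 := abs_le.1 (b1 t k hk)
      push_cast
      rw [abs_le]
      constructor <;> linarith [h2.1, h2.2, h3.1, h3.2]
  refine (h1 k hk).trans ?_
  have h4 : (k : ℝ) ≤ L := by exact_mod_cast hk.le
  nlinarith [mul_le_mul_of_nonneg_left h4 hC0]

/-- A nonvanishing initial gradient makes the first step strictly decrease the risk. -/
theorem risk_one_lt (H : GDRun dim L n z γ ubar β G W η Rseq) : riskW L lg z (W 1) < lg 0 := by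
  obtain ⟨k, hk, hg⟩ := H.hinit_grad
  have h1 : 0 < frobNorm (gradLayer L lg' z (W 0) k) := by
    refine lt_of_le_of_ne (fn_nonneg _) fun h => hg ?_
    rw [fn_eq_vn] at h
    have h2 := vn_eq_zero h.symm
    ext i j
    exact congrFun h2 (i, j)
  have h2 : 0 < gradNormSq L lg' z (W 0) :=
    (pow_pos h1 2).trans_le (sq_fn_gradLayer_le lg' z (W 0) hk)
  have h3 := H.descent 0
  have h4 := mul_pos (H.η_pos 0) h2
  rw [zero_add] at h3
  linarith [H.hinit_risk]

/-- If all layers are longer than `√(E + 1)`, the partial products do not shrink. -/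
theorem one_le_av {W : Layers dim} (hd : dim L = 1) {E : ℝ}
    (hE : ∀ k < L, (frobNorm (W k) ^ 2 - E) * vecNorm (av L W (k + 1)) ^ 2 ≤
        vecNorm (av L W k) ^ 2)
    (h1 : ∀ k < L, 1 ≤ frobNorm (W k) ^ 2 - E) {j : ℕ} (hj : j ≤ L) :
    1 ≤ vecNorm (av L W j) ^ 2 := by
  induction hj using Nat.decreasingInduction with
  | self => simp [vn_av_top hd]
  | of_succ k hk ih => nlinarith [hE k hk, h1 k hk]

/-- The product of the upper layers stays bounded away from zero: when the first layer is long all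
layers are, and when it is short, it could not otherwise produce a predictor of risk below
`lg 0`. -/
theorem exists_lower (H : GDRun dim L n z γ ubar β G W η Rseq) :
    ∃ κ > 0, ∀ t, 1 ≤ t → κ ≤ vecNorm (av L (W t) 1) := by
  obtain ⟨E, hE0, hE⟩ := H.exists_balance
  set δ := lg 0 - riskW L lg z (W 1) with hδ
  have hδ0 : 0 < δ := sub_pos.2 H.risk_one_lt
  refine ⟨min 1 (δ / (2 * E + 1)), lt_min one_pos (by positivity), fun t ht => ?_⟩
  by_cases hF : 2 * E + 1 ≤ frobNorm (W t 0) ^ 2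
  · have h1 := one_le_av H.hd (fun k hk => (hE t k hk).2)
      (fun k hk => by linarith [(abs_le.1 (hE t k hk).1).1]) H.hL
    refine (min_le_left _ _).trans ?_
    nlinarith [vn_nonneg (av L (W t) 1)]
  · push Not at hF
    have h1 : δ ≤ vecNorm (wprod L (W t)) := by
      have h2 := lg_zero_sub_riskV_le H.hn H.hz (wprod L (W t))
      have h3 : riskW L lg z (W t) ≤ riskW L lg z (W 1) := H.risk_antitone ht
      rw [riskW] at h3
      linarith
    have h2 : vecNorm (wprod L (W t)) ≤ frobNorm (W t 0) * vecNorm (av L (W t) 1) := by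
      rw [wprod_eq_av, av_step (W t) H.hL]
      exact vn_transpose_mulVec_le _ _
    have h3 : frobNorm (W t 0) ≤ 2 * E + 1 := by nlinarith [fn_nonneg (W t 0)]
    refine (min_le_right _ _).trans ?_
    rw [div_le_iff₀' (by positivity)]
    exact (h1.trans h2).trans (mul_le_mul_of_nonneg_right h3 (vn_nonneg _))

/-- If the layers stay bounded, then the step sizes are bounded below from some time on: `Rseq`
can only change when a layer leaves the ball of radius `Rseq - 1`. -/
theorem exists_η_lower (H : GDRun dim L n z γ ubar β G W η Rseq) {B : ℝ}
    (hB : ∀ t, 1 ≤ t → ∀ k < L, frobNorm (W t k) ≤ B) :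
    ∃ c > 0, ∃ T, ∀ t, T ≤ t → c ≤ η t := by
  obtain ⟨M, T, hM⟩ : ∃ M T, ∀ t, T ≤ t → Rseq t ≤ M := by
    by_cases h : ∃ T, B + 1 ≤ Rseq T
    · obtain ⟨T, hT⟩ := h
      refine ⟨Rseq T, T, fun t ht => le_of_eq ?_⟩
      induction t, ht using Nat.le_induction with
      | base => rfl
      | succ t ht ih =>
        rw [← ih]
        exact H.hRmono t fun k hk => (hB (t + 1) (by omega) k hk).trans (by linarith)
    · push Not at h
      exact ⟨B + 1, 0, fun t _ => (h t).le⟩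
  have hM1 : 1 ≤ M := (H.hR1 T).trans (hM T le_rfl)
  have hL : (0 : ℝ) < L := by exact_mod_cast H.hL
  have hβG : 0 < β + G := by linarith [H.β_nonneg, H.G_pos]
  refine ⟨min (2 * (L : ℝ) ^ 2 * M ^ (2 * L - 2) * (β + G))⁻¹ 1,
    lt_min (by positivity) one_pos, T, fun t ht => ?_⟩
  rw [H.hη]
  refine min_le_min_right _ (inv_anti₀ (H.den_pos t) ?_)
  have h1 : Rseq t ^ (2 * L - 2) ≤ M ^ (2 * L - 2) :=
    pow_le_pow_left₀ (by linarith [H.hR1 t]) (hM t ht) _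
  gcongr

/-- The risk tends to zero. Otherwise the gradient of the first layer stays bounded below, so
summability of `η ‖∇R‖²` makes the first layer, hence every layer, bounded; then the step sizes are
bounded below as well, which contradicts summability. -/
theorem risk_eventually_lt (H : GDRun dim L n z γ ubar β G W η Rseq) {ε : ℝ} (hε : 0 < ε) :
    ∃ T, ∀ t, T ≤ t → riskW L lg z (W t) < ε := by
  by_contra! hcon
  have hrisk : ∀ t, ε ≤ riskW L lg z (W t) := fun t => by
    obtain ⟨s, hs, h⟩ := hcon t
    exact h.trans (H.risk_antitone hs)
  obtain ⟨κ, hκ, hκ'⟩ := H.exists_lower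
  obtain ⟨E, hE0, hE⟩ := H.exists_balance
  have hn : (0 : ℝ) < n := by exact_mod_cast H.hn
  -- the gradient of the first layer is bounded below by a constant `c`
  set c := κ * (γ * (1 - Real.exp (-ε)) / n) with hc
  have hγ0 : 0 < γ * (1 - Real.exp (-ε)) / n :=
    div_pos (mul_pos H.hγ (sub_pos.2 (Real.exp_lt_one_iff.2 (by linarith)))) hn
  have hc0 : 0 < c := mul_pos hκ hγ0
  have hg : ∀ t, 1 ≤ t → c ≤ frobNorm (gradLayer L lg' z (W t) 0) := by
    intro t ht
    rw [fn_gradLayer, bv_zero]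
    exact mul_le_mul (hκ' t ht) (le_vn_gradRiskV H.hn H.hγ H.hu H.hm (hrisk t)) hγ0.le (vn_nonneg _)
  -- hence the first layer moves by a finite total distance
  have hmove : ∀ t, frobNorm (W (t + 1) 0) ≤ frobNorm (W 1 0) +
      (∑ s ∈ Finset.range (t + 1), η s * gradNormSq L lg' z (W s)) / c := by
    intro t
    induction t with
    | zero =>
      have : 0 ≤ (∑ s ∈ Finset.range (0 + 1), η s * gradNormSq L lg' z (W s)) / c :=
        div_nonneg (Finset.sum_nonneg fun s _ => mul_nonneg (H.η_pos s).le
          (gradNormSq_nonneg _ _ _)) hc0.le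
      simpa using this
    | succ t ih =>
      have h1 := hg (t + 1) (by omega)
      have h2 := sq_fn_gradLayer_le lg' z (W (t + 1)) H.hL
      have h3 : frobNorm (gradLayer L lg' z (W (t + 1)) 0) ≤
          gradNormSq L lg' z (W (t + 1)) / c := by
        rw [le_div_iff₀ hc0]
        nlinarith
      have h4 : frobNorm (W (t + 1 + 1) 0) ≤ frobNorm (W (t + 1) 0) +
          η (t + 1) * frobNorm (gradLayer L lg' z (W (t + 1)) 0) := by
        rw [H.hGD (t + 1) 0 H.hL, sub_eq_add_neg, ← neg_smul]
        refine (fn_add_le _ _).trans ?_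
        rw [fn_smul, abs_neg, abs_of_pos (H.η_pos _)]
      have h5 := mul_le_mul_of_nonneg_left h3 (H.η_pos (t + 1)).le
      rw [Finset.sum_range_succ, add_div, mul_div_assoc]
      linarith
  set B₀ := frobNorm (W 1 0) + 2 * riskW L lg z (W 0) / c with hB₀
  have hb0 : ∀ t, 1 ≤ t → frobNorm (W t 0) ≤ B₀ := by
    intro t ht
    obtain ⟨s, rfl⟩ := Nat.exists_eq_add_of_le' ht
    have := div_le_div_of_nonneg_right (H.sum_le (s + 1)) hc0.le
    linarith [hmove s]
  have hB : ∀ t, 1 ≤ t → ∀ k < L, frobNorm (W t k) ≤ B₀ ^ 2 + E + 1 := by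
    intro t ht k hk
    have h1 := (abs_le.1 (hE t k hk).1).2
    have h2 := pow_le_pow_left₀ (fn_nonneg _) (hb0 t ht) 2
    nlinarith [fn_nonneg (W t k)]
  obtain ⟨ηm, hηm, T, hT⟩ := H.exists_η_lower hB
  have hlow : ∀ m : ℕ, m * (ηm * c ^ 2) ≤
      ∑ s ∈ Finset.range (T + 1 + m), η s * gradNormSq L lg' z (W s) := by
    intro m
    induction m with
    | zero =>
      simp only [Nat.cast_zero, zero_mul]
      exact Finset.sum_nonneg fun s _ => mul_nonneg (H.η_pos s).le (gradNormSq_nonneg _ _ _)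
    | succ m ih =>
      rw [← add_assoc, Finset.sum_range_succ]
      have h1 : ηm * c ^ 2 ≤ η (T + 1 + m) * gradNormSq L lg' z (W (T + 1 + m)) :=
        mul_le_mul (hT _ (by omega)) ((pow_le_pow_left₀ hc0.le (hg _ (by omega)) 2).trans
          (sq_fn_gradLayer_le lg' z _ H.hL)) (sq_nonneg _) (H.η_pos _).le
      push_cast
      linarith
  obtain ⟨m, hm⟩ := exists_nat_gt (2 * riskW L lg z (W 0) / (ηm * c ^ 2))
  rw [div_lt_iff₀ (by positivity)] at hm
  linarith [hlow m, H.sum_le (T + 1 + m)]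

/-- The first layer diverges: otherwise balancedness bounds all layers, hence their product, which
keeps the risk away from zero. -/
theorem fn_tendsto (H : GDRun dim L n z γ ubar β G W η Rseq) :
    Tendsto (fun t => frobNorm (W t 0) ^ 2) atTop atTop := by
  obtain ⟨E, hE0, hE⟩ := H.exists_balance
  rw [tendsto_atTop]
  intro b
  set M := |b| + E + 1 with hM
  obtain ⟨T, hT⟩ := H.risk_eventually_lt (lg_pos (M ^ L))
  filter_upwards [eventually_ge_atTop T] with t ht
  by_contra! hb
  have h1 : ∀ k ∈ Finset.range L, frobNorm (W t k) ≤ M := by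
    intro k hk
    have h1 := (abs_le.1 (hE t k (Finset.mem_range.1 hk)).1).2
    nlinarith [fn_nonneg (W t k), le_abs_self b, abs_nonneg b]
  have h2 := Finset.prod_le_prod (fun k _ => fn_nonneg (W t k)) h1
  rw [Finset.prod_const, Finset.card_range] at h2
  have h3 := lg_le_riskV H.hn H.hz ((vn_wprod_le H.hd (W t)).trans h2)
  exact absurd (hT t ht) (not_lt.2 h3)

/-- The part of the first layer orthogonal to `ū` stays bounded while the layer itself diverges:
once it is long, so is the part of the predictor orthogonal to `ū`, and then the gradient step does
not increase it to first order. -/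
theorem exists_perp_bound (H : GDRun dim L n z γ ubar β G W η Rseq) :
    ∃ B, 0 ≤ B ∧ ∃ T, ∀ t, T ≤ t → 0 ≤ wprod L (W t) ⬝ᵥ ubar ∧
      frobNorm (W t 0) ^ 2 - vecNorm (W t 0 *ᵥ ubar) ^ 2 ≤ B := by
  obtain ⟨E, hE0, hE⟩ := H.exists_balance
  have hn : (0 : ℝ) < n := by exact_mod_cast H.hn
  set α := alphaConst z ubar γ with hα
  have hα0 : 0 < α := H.halpha
  have hsupp := exists_support H.hu H.hm H.hmax H.halpha
  obtain ⟨T₁, hT₁⟩ := H.risk_eventually_lt (div_pos (lg_pos 0) hn)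
  obtain ⟨T₂, hT₂⟩ := eventually_atTop.1 ((tendsto_atTop.1 H.fn_tendsto) (2 * E + 1))
  set T := max T₁ T₂ with hT
  have hc : ∀ t, T ≤ t → 0 ≤ wprod L (W t) ⬝ᵥ ubar := by
    intro t ht
    by_contra! hneg
    set w := wprod L (W t) with hw
    -- a support vector pointing against the orthogonal part of `w` would be misclassified
    have hru : projPerp ubar w ⬝ᵥ ubar = 0 := by
      rw [projPerp, sub_dotProduct, smul_dotProduct, ← vn_sq, H.hu]; simp
    obtain ⟨i, hi, hi2⟩ := hsupp (-projPerp ubar w) (by rw [neg_dotProduct, hru, neg_zero])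
    have h1 : 0 < w ⬝ᵥ z i := pos_of_riskV_lt H.hn (hT₁ t ((le_max_left _ _).trans ht)) i
    have h2 : projPerp ubar w ⬝ᵥ z i = w ⬝ᵥ z i - (w ⬝ᵥ ubar) * γ := by
      rw [projPerp, sub_dotProduct, smul_dotProduct, hi, smul_eq_mul]
    rw [neg_dotProduct, h2] at hi2
    have h3 := mul_nonneg hα0.le (vn_nonneg (-projPerp ubar w))
    nlinarith [H.hγ]
  set P : ℕ → ℝ := fun t => frobNorm (W t 0) ^ 2 - vecNorm (W t 0 *ᵥ ubar) ^ 2 with hP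
  set S : ℕ → ℝ := fun t => gradNormSq L lg' z (W t) with hS
  set thr := E + (2 * n / α) ^ 2 with hthr
  have hthr0 : 0 ≤ thr := by positivity
  have hstep : ∀ t, T ≤ t → P (t + 1) ≤ max (P t) (2 * thr + 1) + η t ^ 2 * S t := by
    intro t ht
    set w := wprod L (W t) with hw
    set g := gradRiskV lg' z w with hg
    set a := av L (W t) 1 with ha
    set r := projPerp ubar w with hr
    have hwa : w = (W t 0)ᵀ *ᵥ a := by rw [hw, wprod_eq_av, av_step (W t) H.hL]
    have hηt := H.η_pos t
    have ha1 : 1 ≤ vecNorm a ^ 2 := one_le_av H.hd (fun k hk => (hE t k hk).2)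
      (fun k hk => by linarith [(abs_le.1 (hE t k hk).1).1, hT₂ t ((le_max_right _ _).trans ht)])
      H.hL
    have hupd : P (t + 1) ≤ P t - 2 * η t * (r ⬝ᵥ g) + η t ^ 2 * S t := by
      have e1 := fn_sq_step lg' z (W t) (W (t + 1)) (H.hGD t) H.hL
      have e2 : W (t + 1) 0 *ᵥ ubar = W t 0 *ᵥ ubar - (η t * (g ⬝ᵥ ubar)) • a := by
        rw [H.hGD t 0 H.hL, gradLayer_eq, sub_mulVec, smul_mulVec, vecMulVec_mulVec, mul_smul,
          bv_zero]
        simp [ha, hg, hw]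
      have e3 : (W t 0 *ᵥ ubar) ⬝ᵥ a = w ⬝ᵥ ubar := by
        rw [hwa, dot_mulVec_transpose, dotProduct_comm]
      have e4 : r ⬝ᵥ g = w ⬝ᵥ g - (w ⬝ᵥ ubar) * (g ⬝ᵥ ubar) := by
        rw [hr, projPerp, sub_dotProduct, smul_dotProduct, smul_eq_mul, dotProduct_comm g]
      have e5 := mul_le_mul_of_nonneg_left (sq_fn_gradLayer_le lg' z (W t) H.hL) (sq_nonneg (η t))
      have e6 : 0 ≤ (η t * (g ⬝ᵥ ubar)) ^ 2 * vecNorm a ^ 2 := by positivity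
      simp only [hP, hS]
      rw [e1, e2, vn_sq_sub_smul, e3, e4]
      linarith
    have hrP : vecNorm r ^ 2 ≤ P t * vecNorm a ^ 2 := by
      rw [hr, hwa]; exact vn_sq_projPerp_le _ H.hu a
    rcases le_total thr (P t) with h | h
    -- long orthogonal part: near rank-one structure transfers the length to the predictor
    · have hPr : P t * vecNorm a ^ 2 ≤ E * vecNorm a ^ 2 + vecNorm r ^ 2 := by
        have h1 := (hE t 0 H.hL).2
        rw [← wprod_eq_av] at h1
        have h2 : (w ⬝ᵥ ubar) ^ 2 ≤ vecNorm (W t 0 *ᵥ ubar) ^ 2 * vecNorm a ^ 2 := by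
          rw [hwa, dot_mulVec_transpose, dotProduct_comm, ← mul_pow, ← sq_abs]
          exact pow_le_pow_left₀ (abs_nonneg _) (abs_dot_le _ _) 2
        rw [hr, vn_sq_projPerp H.hu]
        simp only [hP]
        have h3 : (frobNorm (W t 0) ^ 2 - E) * vecNorm a ^ 2 ≤ vecNorm w ^ 2 := h1
        linarith
      have hr2 : 2 * n / α ≤ vecNorm r := by
        have h1 : (2 * n / α) ^ 2 ≤ vecNorm r ^ 2 := by nlinarith
        exact (pow_le_pow_iff_left₀ (by positivity) (vn_nonneg _) two_ne_zero).1 h1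
      have h3 := projPerp_dot_grad_nonneg H.hn H.hγ hα0 H.hu H.hm hsupp (hc t ht) hr2
      have h4 := mul_nonneg hηt.le h3
      have h5 := le_max_left (P t) (2 * thr + 1)
      linarith
    -- short orthogonal part: a single step moves it by at most a constant
    · have hP0 : 0 ≤ P t := by
        by_contra! hneg
        nlinarith [sq_nonneg (vecNorm r)]
      have h1 : -(r ⬝ᵥ g) ≤ vecNorm r * vecNorm g := by
        linarith [(abs_le.1 (abs_dot_le r g)).1]
      have h2 : vecNorm r ≤ Real.sqrt (P t) * vecNorm a := by
        rw [← pow_le_pow_iff_left₀ (vn_nonneg _) (mul_nonneg (Real.sqrt_nonneg _) (vn_nonneg _))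
          two_ne_zero, mul_pow, Real.sq_sqrt hP0]
        exact hrP
      have h3 : η t * (vecNorm a * vecNorm g) ≤ 1 := by
        have := H.η_grad_le_one t H.hL
        rwa [fn_gradLayer, bv_zero] at this
      have h4 : η t * -(r ⬝ᵥ g) ≤ Real.sqrt (P t) := by
        calc _ ≤ η t * (Real.sqrt (P t) * vecNorm a * vecNorm g) :=
              mul_le_mul_of_nonneg_left (h1.trans
                (mul_le_mul_of_nonneg_right h2 (vn_nonneg _))) hηt.le
          _ = Real.sqrt (P t) * (η t * (vecNorm a * vecNorm g)) := by ring
          _ ≤ _ := mul_le_of_le_one_right (Real.sqrt_nonneg _) h3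
      have h5 : 2 * Real.sqrt (P t) ≤ P t + 1 := by
        nlinarith [sq_nonneg (Real.sqrt (P t) - 1), Real.sq_sqrt hP0]
      have h6 := le_max_right (P t) (2 * thr + 1)
      linarith
  set M := max (P T) (2 * thr + 1) with hM
  have hM0 : 2 * thr + 1 ≤ M := le_max_right _ _
  have hinv : ∀ t, T ≤ t → P t ≤ M + ∑ s ∈ Finset.range t, η s ^ 2 * S s := by
    have hS0 : ∀ s, 0 ≤ η s ^ 2 * S s := fun s =>
      mul_nonneg (sq_nonneg _) (gradNormSq_nonneg _ _ _)
    intro t ht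
    induction t, ht using Nat.le_induction with
    | base =>
      exact (le_max_left _ _).trans
        (le_add_of_nonneg_right (Finset.sum_nonneg fun s _ => hS0 s))
    | succ t ht ih =>
      rw [Finset.sum_range_succ, ← add_assoc]
      refine (hstep t ht).trans (add_le_add_left (max_le ih ?_) _)
      exact hM0.trans (le_add_of_nonneg_right (Finset.sum_nonneg fun s _ => hS0 s))
  refine ⟨M + 2 * riskW L lg z (W 0), ?_, T, fun t ht => ⟨hc t ht, ?_⟩⟩
  · have h : 0 ≤ riskW L lg z (W 0) := riskV_nonneg _ _
    linarith
  · exact (hinv t ht).trans (add_le_add_right (H.sum_sq_le t) M)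

end GDRun

/-! ### Convergence in direction -/

theorem vn_mulVec_le_specNorm {m n : Type*} [Fintype m] [Fintype n] (A : Matrix m n ℝ)
    {v : n → ℝ} (hv : vecNorm v = 1) : vecNorm (A *ᵥ v) ≤ specNorm A := by
  refine le_csSup ⟨frobNorm A, ?_⟩ ⟨v, hv, rfl⟩
  rintro c ⟨w, hw, rfl⟩
  simpa [hw] using vn_mulVec_le A w

/-- If `A` sends almost all of its Frobenius norm through the direction `ubar`, then every top
right singular vector of `A` is close to `ubar` or `-ubar`. -/
theorem top_singular_near {m d : ℕ} {A : Matrix (Fin m) (Fin d) ℝ}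
    {ubar : Fin d → ℝ} (hu : vecNorm ubar = 1) {u : Fin m → ℝ} {v : Fin d → ℝ}
    (h : IsTopSingularPair A u v) :
    vecNorm (A *ᵥ ubar) ^ 2 * (1 - (v ⬝ᵥ ubar) ^ 2) ≤
      frobNorm A ^ 2 - vecNorm (A *ᵥ ubar) ^ 2 := by
  obtain ⟨hu1, hv1, -, h2⟩ := h
  have h3 := vn_sq_projPerp_le A hu u
  have h4 : projPerp ubar (Aᵀ *ᵥ u) = specNorm A • projPerp ubar v := by
    rw [show Aᵀ *ᵥ u = specNorm A • v from h2]
    simp [projPerp, smul_sub, smul_smul]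
  rw [h4, vn_smul, mul_pow, sq_abs, vn_sq_projPerp hu, hv1, hu1] at h3
  have h5 : (v ⬝ᵥ ubar) ^ 2 ≤ 1 := by
    have := abs_dot_le v ubar
    rw [hv1, hu, mul_one] at this
    exact (sq_le_one_iff_abs_le_one _).2 this
  have h6 := pow_le_pow_left₀ (vn_nonneg _) (vn_mulVec_le_specNorm A hu) 2
  nlinarith

namespace GDRun

variable {dim : ℕ → ℕ} {L n : ℕ} {z : Fin n → Fin (dim 0) → ℝ} {γ : ℝ}
    {ubar : Fin (dim 0) → ℝ} {β G : ℝ} {W : ℕ → Layers dim} {η Rseq : ℕ → ℝ}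

theorem top_singular_tendsto (H : GDRun dim L n z γ ubar β G W η Rseq)
    (u1 : ℕ → Fin (dim 1) → ℝ) (v1 : ℕ → Fin (dim 0) → ℝ)
    (h : ∀ t, IsTopSingularPair (W t 0) (u1 t) (v1 t)) :
    Tendsto (fun t => |v1 t ⬝ᵥ ubar|) atTop (nhds 1) := by
  obtain ⟨B, hB0, T, hT⟩ := H.exists_perp_bound
  have hF := H.fn_tendsto
  have hlow : Tendsto (fun t => 1 - B / (frobNorm (W t 0) ^ 2 + -B)) atTop (nhds (1 - 0)) :=
    tendsto_const_nhds.sub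
      (tendsto_const_nhds.div_atTop (tendsto_atTop_add_const_right _ _ hF))
  rw [sub_zero] at hlow
  have habs : ∀ t, |v1 t ⬝ᵥ ubar| ≤ 1 := fun t => by
    simpa [(h t).2.1, H.hu] using abs_dot_le (v1 t) ubar
  refine tendsto_of_tendsto_of_tendsto_of_le_of_le' hlow tendsto_const_nhds ?_
    (Eventually.of_forall habs)
  filter_upwards [eventually_ge_atTop T, hF.eventually_gt_atTop B] with t ht htB
  have h1 := top_singular_near H.hu (h t)
  have h2 := (hT t ht).2
  have h3 := habs t
  have h4 := sq_abs (v1 t ⬝ᵥ ubar)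
  have h5 : 1 - (v1 t ⬝ᵥ ubar) ^ 2 ≤ B / (frobNorm (W t 0) ^ 2 + -B) := by
    rw [le_div_iff₀ (by linarith)]
    have h6 : 0 ≤ 1 - (v1 t ⬝ᵥ ubar) ^ 2 := by nlinarith [abs_nonneg (v1 t ⬝ᵥ ubar)]
    nlinarith
  nlinarith [abs_nonneg (v1 t ⬝ᵥ ubar)]

/-- The predictor retains, along `ubar`, asymptotically all of the largest norm that the layer norms
allow. -/
theorem exists_aligned (H : GDRun dim L n z γ ubar β G W η Rseq) :
    ∃ D, ∀ᶠ t in atTop, 0 ≤ wprod L (W t) ⬝ᵥ ubar ∧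
      ∏ k ∈ Finset.range L, (frobNorm (W t k) ^ 2 + -D) ≤ (wprod L (W t) ⬝ᵥ ubar) ^ 2 := by
  obtain ⟨B, hB0, T, hT⟩ := H.exists_perp_bound
  obtain ⟨E, hE0, hE⟩ := H.exists_balance
  refine ⟨E + B, ?_⟩
  filter_upwards [eventually_ge_atTop T, H.fn_tendsto.eventually_ge_atTop (E + (E + B))]
    with t ht htB
  refine ⟨(hT t ht).1, ?_⟩
  have hpos : ∀ k < L, 0 ≤ frobNorm (W t k) ^ 2 + -(E + B) := fun k hk => by
    linarith [(abs_le.1 (hE t k hk).1).1]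
  have hav : ∀ j, j ≤ L → ∏ k ∈ Finset.Ico j L, (frobNorm (W t k) ^ 2 + -(E + B)) ≤
      vecNorm (av L (W t) j) ^ 2 := by
    intro j hj
    induction hj using Nat.decreasingInduction with
    | self => simp [vn_av_top H.hd]
    | of_succ k hk ih =>
      rw [Finset.prod_eq_prod_Ico_succ_bot hk]
      nlinarith [(hE t k hk).2, mul_le_mul_of_nonneg_left ih (hpos k hk),
        mul_nonneg hB0 (sq_nonneg (vecNorm (av L (W t) (k + 1))))]
  have hL : 0 < L := H.hL
  have h1 := hav 1 H.hL
  have h2 : (frobNorm (W t 0) ^ 2 - E) * vecNorm (av L (W t) 1) ^ 2 ≤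
      vecNorm (av L (W t) 0) ^ 2 := (hE t 0 hL).2
  have h3 := vn_sq_projPerp_le (W t 0) H.hu (av L (W t) 1)
  rw [← av_step (W t) hL, vn_sq_projPerp H.hu] at h3
  rw [Finset.range_eq_Ico, Finset.prod_eq_prod_Ico_succ_bot hL, wprod_eq_av]
  change (frobNorm (W t 0) ^ 2 + -(E + B)) *
    ∏ k ∈ Finset.Ico 1 L, (frobNorm (W t k) ^ 2 + -(E + B)) ≤ _
  nlinarith [mul_le_mul_of_nonneg_left h1 (hpos 0 hL),
    mul_le_mul_of_nonneg_right (hT t ht).2 (sq_nonneg (vecNorm (av L (W t) 1)))]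

theorem wprod_tendsto (H : GDRun dim L n z γ ubar β G W η Rseq) :
    Tendsto (fun t => (∏ k ∈ Finset.range L, frobNorm (W t k))⁻¹ • wprod L (W t))
      atTop (nhds ubar) := by
  obtain ⟨D, hD⟩ := H.exists_aligned
  obtain ⟨E, hE0, hE⟩ := H.exists_balance
  have hF : ∀ k < L, Tendsto (fun t => frobNorm (W t k) ^ 2) atTop atTop := fun k hk =>
    tendsto_atTop_mono (fun t => by linarith [(abs_le.1 (hE t k hk).1).1])
      (tendsto_atTop_add_const_right _ (-E) H.fn_tendsto)
  have hρ : Tendsto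
      (fun t => ∏ k ∈ Finset.range L, (1 - D / frobNorm (W t k) ^ 2)) atTop (nhds 1) := by
    have : Tendsto (fun t => ∏ k ∈ Finset.range L, (1 - D / frobNorm (W t k) ^ 2)) atTop
        (nhds (∏ _k ∈ Finset.range L, (1 - 0 : ℝ))) :=
      tendsto_finsetProd _ fun k hk => tendsto_const_nhds.sub
        (tendsto_const_nhds.div_atTop (hF k (Finset.mem_range.1 hk)))
    simpa using this
  have hsqrt : Tendsto (fun t => Real.sqrt (2 - 2 *
      ∏ k ∈ Finset.range L, (1 - D / frobNorm (W t k) ^ 2))) atTop (nhds 0) := by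
    have := (hρ.const_mul 2).const_sub 2 |>.sqrt
    simpa using this
  have hpos : ∀ᶠ t in atTop, ∀ k ∈ Finset.range L, 0 < frobNorm (W t k) := by
    rw [Filter.eventually_all_finset]
    intro k hk
    filter_upwards [(hF k (Finset.mem_range.1 hk)).eventually_gt_atTop 0] with t ht
    exact (fn_nonneg _).lt_of_ne fun h => by simp [← h] at ht
  rw [tendsto_pi_nhds]
  intro j
  rw [tendsto_iff_dist_tendsto_zero]
  refine squeeze_zero' (Eventually.of_forall fun _ => dist_nonneg) ?_ hsqrt
  filter_upwards [hD, hpos] with t ⟨hc0, hc⟩ hp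
  set w := wprod L (W t) with hw
  set Q := ∏ k ∈ Finset.range L, frobNorm (W t k) with hQ
  have hQ0 : 0 < Q := Finset.prod_pos hp
  have hwQ : vecNorm w ≤ Q := vn_wprod_le H.hd (W t)
  set s := Q⁻¹ * (w ⬝ᵥ ubar) with hs
  have hs0 : 0 ≤ s := mul_nonneg (inv_nonneg.2 hQ0.le) hc0
  have hs1 : s ≤ 1 := by
    rw [hs, inv_mul_le_iff₀ hQ0]
    have := dot_le w ubar
    rw [H.hu] at this
    linarith
  have hsρ : ∏ k ∈ Finset.range L, (1 - D / frobNorm (W t k) ^ 2) ≤ s ^ 2 := by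
    have h1 : ∏ k ∈ Finset.range L, (1 - D / frobNorm (W t k) ^ 2) =
        (Q ^ 2)⁻¹ * ∏ k ∈ Finset.range L, (frobNorm (W t k) ^ 2 + -D) := by
      rw [hQ, ← Finset.prod_pow, ← Finset.prod_inv_distrib, ← Finset.prod_mul_distrib]
      refine Finset.prod_congr rfl fun k hk => ?_
      have := (hp k hk).ne'
      field_simp
      ring
    rw [h1, hs, mul_pow, inv_pow]
    exact mul_le_mul_of_nonneg_left hc (by positivity)
  have hnorm : vecNorm (Q⁻¹ • w) ≤ 1 := by
    rw [vn_smul, abs_of_pos (inv_pos.2 hQ0), inv_mul_le_iff₀ hQ0]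
    linarith
  have hdist := vn_sq_sub_smul (Q⁻¹ • w) ubar 1
  rw [H.hu, smul_dotProduct, smul_eq_mul, ← hs, one_smul] at hdist
  have hn2 : vecNorm (Q⁻¹ • w) ^ 2 ≤ 1 := pow_le_one₀ (vn_nonneg _) hnorm
  refine (?_ : _ ≤ vecNorm (Q⁻¹ • w - ubar)).trans (Real.le_sqrt_of_sq_le (by nlinarith))
  rw [Real.dist_eq]
  refine Real.abs_le_sqrt ?_
  exact Finset.single_le_sum (f := fun i => ((Q⁻¹ • w - ubar) i) ^ 2)
    (fun _ _ => sq_nonneg _) (Finset.mem_univ j)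

end GDRun

theorem stmt18
    (dim : ℕ → ℕ) (L n : ℕ) (hL : 1 ≤ L) (hdimL : dim L = 1) (hn : 0 < n)
    (x : Fin n → Fin (dim 0) → ℝ) (y : Fin n → ℝ) (z : Fin n → Fin (dim 0) → ℝ)
    (hx : ∀ i, vecNorm (x i) ≤ 1) (hy : ∀ i, y i = 1 ∨ y i = -1)
    (hz : ∀ i, z i = y i • x i)
    (γ : ℝ) (hγ : 0 < γ) (ubar : Fin (dim 0) → ℝ) (hubar_unit : vecNorm ubar = 1)
    (hubar_margin : ∀ i, γ ≤ ubar ⬝ᵥ z i)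
    (hubar_max : ∀ u' : Fin (dim 0) → ℝ, vecNorm u' = 1 → ∃ i, u' ⬝ᵥ z i ≤ γ)
    (ℓ ℓ' : ℝ → ℝ)
    (hℓ : ℓ = fun s : ℝ => Real.log (1 + Real.exp (-s)))
    (hℓ' : ℓ' = fun s : ℝ => -Real.exp (-s) / (1 + Real.exp (-s)))
    (β G : ℝ) (hβ : ∀ a b : ℝ, |ℓ' a - ℓ' b| ≤ β * |a - b|) (hG : ∀ a : ℝ, |ℓ' a| ≤ G)
    (W : ℕ → Layers dim) (η : ℕ → ℝ) (Rseq : ℕ → ℝ)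
    (hGD : ∀ t : ℕ, ∀ k < L, W (t+1) k = W t k - η t • gradLayer L ℓ' z (W t) k)
    (hη : ∀ t, η t = min (2 * (L : ℝ)^2 * (Rseq t)^(2*L-2) * (β + G))⁻¹ 1)
    (hR1 : ∀ t, 1 ≤ Rseq t)
    (hRt : ∀ t, ∀ k < L, frobNorm (W t k) ≤ Rseq t - 1)
    (hRmono : ∀ t, (∀ k < L, frobNorm (W (t+1) k) ≤ Rseq t - 1) → Rseq (t+1) = Rseq t)
    (hinit_grad : ∃ k < L, gradLayer L ℓ' z (W 0) k ≠ 0)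
    (hinit_risk : riskW L ℓ z (W 0) ≤ ℓ 0)
    (halpha : 0 < alphaConst z ubar γ) :
    (∀ (u1 : ℕ → Fin (dim 1) → ℝ) (v1 : ℕ → Fin (dim 0) → ℝ),
        (∀ t : ℕ, IsTopSingularPair (W t 0) (u1 t) (v1 t)) →
        Tendsto (fun t : ℕ => |v1 t ⬝ᵥ ubar|) atTop (nhds 1))
    ∧ Tendsto (fun t : ℕ =>
        (∏ k ∈ Finset.range L, frobNorm (W t k))⁻¹ • wprod L (W t))
      atTop (nhds ubar) := by


  have hlg : ℓ = lg := hℓ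
  have hlg' : ℓ' = lg' := hℓ'
  subst hlg hlg'
  have hz1 : ∀ i, vecNorm (z i) ≤ 1 := fun i => by
    rw [hz i, vn_smul]
    rcases hy i with h | h <;> simpa [h] using hx i
  have H : GDRun dim L n z γ ubar β G W η Rseq :=
    ⟨hL, hdimL, hn, hz1, hγ, hubar_unit, hubar_margin, hubar_max, hβ, hG, hGD, hη, hR1, hRt,
      hRmono, hinit_grad, hinit_risk, halpha⟩
  exact ⟨H.top_singular_tendsto, H.wprod_tendsto⟩

end
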